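/- Let G be a finite group. Every 2-maximal subgroup of G is K-𝔘-subnormal in G if and only if G is either supersoluble or an SDH-group. -/

import Mathlib

open Subgroup

/-- A finite group is supersoluble if it has a normal series, all of whose terms are
normal in the whole group, with cyclic factors. -/
def IsSupersoluble (G : Type*) [Group G] : Prop :=
  ∃ (n : ℕ) (c : Fin (n + 1) → Subgroup G) (hc : ∀ i, (c i).Normal),
    c 0 = ⊥ ∧ c (Fin.last n) = ⊤ ∧
    ∀ i : Fin n, c i.castSucc ≤ c i.succ ∧
      haveI := (hc i.castSucc).subgroupOf (c i.succ)
      IsCyclic (↥(c i.succ) ⧸ ((c i.castSucc).subgroupOf (c i.succ)))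

/-- `H` is a maximal subgroup of `K`, where `H ≤ K` are subgroups of a common group. -/
def IsMaximalIn {G : Type*} [Group G] (H K : Subgroup G) : Prop :=
  H ≤ K ∧ IsCoatom (H.subgroupOf K)

/-- The `n`-maximal subgroups of `G`: `0`-maximal is `G` itself, and an `(n+1)`-maximal
subgroup is a maximal subgroup of some `n`-maximal subgroup. -/
def IsNMaximal {G : Type*} [Group G] : ℕ → Subgroup G → Prop
  | 0, H => H = ⊤
  | n + 1, H => ∃ K : Subgroup G, IsNMaximal n K ∧ IsMaximalIn H K

/-- `H` is `K`-`𝔘`-subnormal in `K`: there is a chain of subgroups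
`H = H₀ ≤ H₁ ≤ ⋯ ≤ Hₜ = K` such that at each step either `H_{i-1}` is normal in `H_i`
or `H_i` modulo the core of `H_{i-1}` in `H_i` is supersoluble. -/
def IsKUSubnormalIn {G : Type*} [Group G] (H K : Subgroup G) : Prop :=
  ∃ (n : ℕ) (c : Fin (n + 1) → Subgroup G),
    c 0 = H ∧ c (Fin.last n) = K ∧
    ∀ i : Fin n, c i.castSucc ≤ c i.succ ∧
      (((c i.castSucc).subgroupOf (c i.succ)).Normal ∨
        IsSupersoluble (↥(c i.succ) ⧸ ((c i.castSucc).subgroupOf (c i.succ)).normalCore))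

/-- `H` is `K`-`𝔘`-subnormal in `G`. -/
def IsKUSubnormal {G : Type*} [Group G] (H : Subgroup G) : Prop :=
  IsKUSubnormalIn H ⊤

/-- `H` is `𝔘`-subnormal in `G`: there is a chain of subgroups
`H = H₀ ≤ H₁ ≤ ⋯ ≤ Hₙ = G` with `H_i` modulo the core of `H_{i-1}` in `H_i`
supersoluble at each step. -/
def IsUSubnormal {G : Type*} [Group G] (H : Subgroup G) : Prop :=
  ∃ (n : ℕ) (c : Fin (n + 1) → Subgroup G),
    c 0 = H ∧ c (Fin.last n) = ⊤ ∧
    ∀ i : Fin n, c i.castSucc ≤ c i.succ ∧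
      IsSupersoluble (↥(c i.succ) ⧸ ((c i.castSucc).subgroupOf (c i.succ)).normalCore)

/-- The supersoluble residual `G^𝔘` of `G`: the intersection of all normal subgroups `N`
of `G` with `G/N` supersoluble. -/
def ssResidual (G : Type*) [Group G] : Subgroup G :=
  ⨅ N ∈ {N : Subgroup G | ∃ hN : N.Normal, haveI := hN; IsSupersoluble (G ⧸ N)}, N

/-- `N` is a minimal normal subgroup of `G`. -/
def IsMinimalNormal {G : Type*} [Group G] (N : Subgroup G) : Prop :=
  N.Normal ∧ N ≠ ⊥ ∧ ∀ M : Subgroup G, M.Normal → M ≤ N → M ≠ ⊥ → M = N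

/-- `G` is minimal nonsupersoluble: not supersoluble, but all proper subgroups are. -/
def IsMinimalNonsupersoluble (G : Type*) [Group G] : Prop :=
  ¬ IsSupersoluble G ∧ ∀ H : Subgroup G, H ≠ ⊤ → IsSupersoluble H

/-- `G` is an `SDH`-group: minimal nonsupersoluble with `G^𝔘` a minimal normal subgroup. -/
def IsSDH (G : Type*) [Group G] : Prop :=
  IsMinimalNonsupersoluble G ∧ IsMinimalNormal (ssResidual G)

/-- `H` is a Sylow `p`-subgroup of its ambient (finite) group. -/
def IsSylowSubgroup {G : Type*} [Group G] (p : ℕ) (H : Subgroup G) : Prop :=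
  IsPGroup p H ∧ ¬ p ∣ H.index

/-- A finite group is Ore dispersive if, enumerating the prime divisors of `|G|`
in decreasing order as `p₁ > p₂ > ⋯ > pₙ`, for every `i` it has a normal subgroup of
order `p₁^{a₁} ⋯ p_i^{a_i}`. -/
def OreDispersive (G : Type*) [Group G] : Prop :=
  ∀ p : ℕ, p.Prime → ∃ N : Subgroup G, N.Normal ∧
    Nat.card N =
      ∏ q ∈ (Nat.card G).primeFactors.filter (fun q => p ≤ q),
        q ^ (Nat.card G).factorization q

/-- `A/B` is a chief factor of `G`. -/
def IsChiefFactor {G : Type*} [Group G] (A B : Subgroup G) : Prop :=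
  A.Normal ∧ B ≤ A ∧ ∃ hB : B.Normal,
    haveI := hB
    IsMinimalNormal (A.map (QuotientGroup.mk' B))

/-- The subgroups `H` and `K` of `G` are conjugate in `G`. -/
def ConjSubgroup {G : Type*} [Group G] (H K : Subgroup G) : Prop :=
  ∃ g : G, K = H.map (MulAut.conj g).toMonoidHom

/-- The Frattini subgroup of a subgroup `H` of `G`, as a subgroup of `G`. -/
def frattiniIn {G : Type*} [Group G] (H : Subgroup G) : Subgroup G :=
  (frattini H).map H.subtype

/-- `G = P ⋊ (Q ⋊ R)` as an internal statement about subgroups `P`, `Q`, `R` of `G`. -/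
def IsInternalSemidirect3 {G : Type*} [Group G] (P Q R : Subgroup G) : Prop :=
  P.Normal ∧ P ⊓ (Q ⊔ R) = ⊥ ∧ P ⊔ Q ⊔ R = ⊤ ∧
    (Q.subgroupOf (Q ⊔ R)).Normal ∧ Q ⊓ R = ⊥

/-- `G = P ⋊ (Q ⋊ (R ⋊ T))` as an internal statement about subgroups of `G`. -/
def IsInternalSemidirect4 {G : Type*} [Group G] (P Q R T : Subgroup G) : Prop :=
  P.Normal ∧ P ⊓ (Q ⊔ R ⊔ T) = ⊥ ∧ P ⊔ Q ⊔ R ⊔ T = ⊤ ∧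
    (Q.subgroupOf (Q ⊔ R ⊔ T)).Normal ∧ Q ⊓ (R ⊔ T) = ⊥ ∧
    (R.subgroupOf (R ⊔ T)).Normal ∧ R ⊓ T = ⊥


universe u

theorem chain_iff {α : Type*} (r : α → α → Prop) (a b : α) :
    (∃ (n : ℕ) (c : Fin (n + 1) → α), c 0 = a ∧ c (Fin.last n) = b ∧
      ∀ i : Fin n, r (c i.castSucc) (c i.succ)) ↔ Relation.ReflTransGen r a b := by
  constructor
  · rintro ⟨n, c, h0, h1, h⟩
    subst h0 h1
    have : ∀ i : Fin (n + 1), Relation.ReflTransGen r (c 0) (c i) := by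
      intro i
      induction i using Fin.induction with
      | zero => exact .refl
      | succ i ih => exact ih.tail (h i)
    exact this _
  · intro h
    induction h with
    | refl => exact ⟨0, fun _ => a, rfl, rfl, fun i => i.elim0⟩
    | @tail x y _ hr ih =>
      obtain ⟨n, c, h0, h1, h⟩ := ih
      refine ⟨n + 1, Fin.snoc c y, ?_, ?_, ?_⟩
      · rw [← h0]
        have : (0 : Fin (n + 2)) = Fin.castSucc 0 := rfl
        rw [this, Fin.snoc_castSucc]
      · rw [Fin.snoc_last]
      · intro i
        induction i using Fin.lastCases with
        | last =>
          rw [Fin.snoc_castSucc, Fin.succ_last, Fin.snoc_last, h1]; exact hr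
        | cast i =>
          rw [Fin.snoc_castSucc, Fin.succ_castSucc, Fin.snoc_castSucc]; exact h i

/-- `B/A` is a cyclic factor of two normal subgroups. -/
def SStep {G : Type*} [Group G] (A B : Subgroup G) : Prop :=
  A.Normal ∧ B.Normal ∧ A ≤ B ∧ ∃ b ∈ B, ∀ x ∈ B, ∃ n : ℤ, x * b ^ n ∈ A

/-- there is a cyclic normal series from N to G. -/
def SSr {G : Type*} [Group G] (N : Subgroup G) : Prop := Relation.ReflTransGen SStep N ⊤

theorem cyc_pull {K G : Type*} [Group K] [Group G] (f : K →* G) (A : Subgroup G) [A.Normal]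
    (b : G) (h : ∀ x : K, ∃ n : ℤ, f x * b ^ n ∈ A) :
    ∃ k : K, ∀ x, ∃ n : ℤ, f x * f k ^ n ∈ A := by
  let g := (QuotientGroup.mk' A).comp f
  have hle : g.range ≤ Subgroup.zpowers (QuotientGroup.mk' A b) := by
    rintro _ ⟨x, rfl⟩
    obtain ⟨n, hn⟩ := h x
    refine ⟨-n, ?_⟩
    have : QuotientGroup.mk' A (f x * b ^ n) = 1 := (QuotientGroup.eq_one_iff _).2 hn
    rw [map_mul, map_zpow] at this
    simp only
    rw [zpow_neg]
    exact (eq_inv_of_mul_eq_one_left this).symm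
  have : IsCyclic g.range := by
    have := isCyclic_of_injective (Subgroup.inclusion hle) (Subgroup.inclusion_injective hle)
    exact this
  obtain ⟨⟨_, k, rfl⟩, hk⟩ := this
  refine ⟨k, fun x => ?_⟩
  obtain ⟨n, hn⟩ := hk ⟨g x, x, rfl⟩
  refine ⟨-n, ?_⟩
  have hn' : g k ^ n = g x := congrArg Subtype.val hn
  apply (QuotientGroup.eq_one_iff _).1
  change QuotientGroup.mk' A _ = 1
  rw [map_mul, map_zpow, zpow_neg]
  change g x * (g k ^ n)⁻¹ = 1
  rw [hn', mul_inv_cancel]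

theorem sstep_iff {G : Type*} [Group G] (A B : Subgroup G) (hA : A.Normal) :
    haveI := hA.subgroupOf B
    IsCyclic (B ⧸ A.subgroupOf B) ↔ ∃ b ∈ B, ∀ x ∈ B, ∃ n : ℤ, x * b ^ n ∈ A := by
  have := hA.subgroupOf B
  constructor
  · rintro ⟨q, hq⟩
    obtain ⟨b, rfl⟩ := QuotientGroup.mk'_surjective _ q
    refine ⟨b, b.2, fun x hx => ?_⟩
    obtain ⟨n, hn⟩ := hq (QuotientGroup.mk' _ ⟨x, hx⟩)
    refine ⟨-n, ?_⟩
    have : (⟨x, hx⟩ : B) * b ^ (-n) ∈ A.subgroupOf B := by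
      apply (QuotientGroup.eq_one_iff _).1
      change QuotientGroup.mk' _ _ = 1
      rw [map_mul, map_zpow, zpow_neg]
      simp only at hn
      rw [hn, mul_inv_cancel]
    simpa [Subgroup.mem_subgroupOf] using this
  · rintro ⟨b, hb, h⟩
    refine ⟨QuotientGroup.mk' _ ⟨b, hb⟩, fun q => ?_⟩
    obtain ⟨x, rfl⟩ := QuotientGroup.mk'_surjective _ q
    obtain ⟨n, hn⟩ := h x x.2
    refine ⟨-n, ?_⟩
    have : x * (⟨b, hb⟩ : B) ^ n ∈ A.subgroupOf B := by
      simpa [Subgroup.mem_subgroupOf] using hn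
    have := (QuotientGroup.eq_one_iff _).2 this
    change QuotientGroup.mk' _ _ = 1 at this
    rw [map_mul, map_zpow] at this
    simp only
    rw [zpow_neg]
    exact (eq_inv_of_mul_eq_one_left this).symm

theorem ss_iff {G : Type*} [Group G] : IsSupersoluble G ↔ SSr (⊥ : Subgroup G) := by
  unfold SSr
  rw [← chain_iff]
  constructor
  · rintro ⟨n, c, hc, h0, h1, h⟩
    refine ⟨n, c, h0, h1, fun i => ⟨hc _, hc _, (h i).1, ?_⟩⟩
    exact (sstep_iff _ _ (hc _)).1 (h i).2
  · rintro ⟨n, c, h0, h1, h⟩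
    have hc : ∀ i, (c i).Normal := by
      intro i
      induction i using Fin.cases with
      | zero => rw [h0]; infer_instance
      | succ i => exact (h i).2.1
    refine ⟨n, c, hc, h0, h1, fun i => ⟨(h i).2.2.1, ?_⟩⟩
    exact (sstep_iff _ _ (hc _)).2 (h i).2.2.2

theorem SStep.comap {K G : Type*} [Group K] [Group G] (f : K →* G) {A B : Subgroup G}
    (h : SStep A B) : SStep (A.comap f) (B.comap f) := by
  obtain ⟨hA, hB, hAB, b, hb, h⟩ := h
  refine ⟨hA.comap f, hB.comap f, Subgroup.comap_mono hAB, ?_⟩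
  obtain ⟨k, hk⟩ := cyc_pull (f.comp (B.comap f).subtype) A b (fun x => h _ x.2)
  refine ⟨k, k.2, fun x hx => ?_⟩
  obtain ⟨n, hn⟩ := hk ⟨x, hx⟩
  exact ⟨n, by simpa [Subgroup.mem_comap] using hn⟩

theorem SStep.map {K G : Type*} [Group K] [Group G] (f : K →* G) (hf : Function.Surjective f)
    {A B : Subgroup K} (h : SStep A B) : SStep (A.map f) (B.map f) := by
  obtain ⟨hA, hB, hAB, b, hb, h⟩ := h
  refine ⟨hA.map f hf, hB.map f hf, Subgroup.map_mono hAB, f b, ⟨b, hb, rfl⟩, ?_⟩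
  rintro _ ⟨x, hx, rfl⟩
  obtain ⟨n, hn⟩ := h x hx
  exact ⟨n, ⟨_, hn, by simp⟩⟩

theorem SStep.inf {G : Type*} [Group G] {A B : Subgroup G} (C : Subgroup G) (hC : C.Normal)
    (h : SStep A B) : SStep (A ⊓ C) (B ⊓ C) := by
  obtain ⟨hA, hB, hAB, b, hb, h⟩ := h
  refine ⟨inferInstance, inferInstance, inf_le_inf_right _ hAB, ?_⟩
  obtain ⟨k, hk⟩ := cyc_pull (B ⊓ C).subtype A b (fun x => h _ x.2.1)
  refine ⟨k, k.2, fun x hx => ?_⟩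
  obtain ⟨n, hn⟩ := hk ⟨x, hx⟩
  exact ⟨n, hn, C.mul_mem hx.2 (C.zpow_mem k.2.2 n)⟩

theorem SSr.comap {K G : Type*} [Group K] [Group G] (f : K →* G) {A : Subgroup G}
    (h : SSr A) : SSr (A.comap f) := by
  have := Relation.ReflTransGen.lift (p := SStep) (Subgroup.comap f) (fun _ _ h => SStep.comap f h) _ _ h
  rwa [Function.onFun, Subgroup.comap_top] at this

theorem SSr.map {K G : Type*} [Group K] [Group G] (f : K →* G) (hf : Function.Surjective f)
    {A : Subgroup K} (h : SSr A) : SSr (A.map f) := by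
  have := Relation.ReflTransGen.lift (p := SStep) (Subgroup.map f) (fun _ _ h => SStep.map f hf h) _ _ h
  rwa [Function.onFun, Subgroup.map_top_of_surjective f hf] at this

theorem SSr.inf {G : Type*} [Group G] {A B : Subgroup G} (hB : B.Normal)
    (h : SSr A) (h' : SSr B) : SSr (A ⊓ B) := by
  have := Relation.ReflTransGen.lift (p := SStep) (· ⊓ B) (fun _ _ h => SStep.inf B hB h) _ _ h
  simp only [Function.onFun, top_inf_eq] at this
  exact this.trans h'

theorem ss_quot_iff {G : Type*} [Group G] (N : Subgroup G) [N.Normal] :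
    IsSupersoluble (G ⧸ N) ↔ SSr N := by
  rw [ss_iff]
  constructor
  · intro h
    have := h.comap (QuotientGroup.mk' N)
    rwa [MonoidHom.comap_bot, QuotientGroup.ker_mk'] at this
  · intro h
    have := h.map (QuotientGroup.mk' N) (QuotientGroup.mk'_surjective N)
    rwa [QuotientGroup.map_mk'_self] at this

theorem SSr.mono {G : Type*} [Group G] {A B : Subgroup G} (hB : B.Normal) (hAB : A ≤ B)
    (h : SSr A) : SSr B := by
  have := (h.map (QuotientGroup.mk' B) (QuotientGroup.mk'_surjective B)).comap (QuotientGroup.mk' B)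
  rwa [QuotientGroup.comap_map_mk', sup_of_le_left hAB] at this

theorem ss_of_inj {K G : Type*} [Group K] [Group G] (f : K →* G) (hf : Function.Injective f)
    (h : IsSupersoluble G) : IsSupersoluble K := by
  rw [ss_iff] at *
  have := h.comap f
  rwa [MonoidHom.comap_bot, (MonoidHom.ker_eq_bot_iff f).2 hf] at this

theorem ss_of_surj {K G : Type*} [Group K] [Group G] (f : K →* G) (hf : Function.Surjective f)
    (h : IsSupersoluble K) : IsSupersoluble G := by
  rw [ss_iff] at *
  have := h.map f hf
  rwa [Subgroup.map_bot] at this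

theorem ss_sub {G : Type*} [Group G] (H : Subgroup G) (h : IsSupersoluble G) :
    IsSupersoluble H := ss_of_inj H.subtype H.subtype_injective h

theorem ss_le {G : Type*} [Group G] {H K : Subgroup G} (hHK : H ≤ K) (h : IsSupersoluble K) :
    IsSupersoluble H :=
  ss_of_inj (Subgroup.inclusion hHK) (Subgroup.inclusion_injective hHK) h

theorem SSr.res_le {G : Type*} [Group G] {N : Subgroup G} (hN : N.Normal) (h : SSr N) :
    ssResidual G ≤ N := by
  unfold ssResidual
  exact iInf₂_le_of_le N ⟨hN, (ss_quot_iff N).2 h⟩ le_rfl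

theorem ssr_top {G : Type*} [Group G] : SSr (⊤ : Subgroup G) := Relation.ReflTransGen.refl

theorem res_spec (G : Type*) [Group G] [Finite G] :
    (ssResidual G).Normal ∧ SSr (ssResidual G) := by
  classical
  have key : ∀ s : Finset (Subgroup G), (∀ N ∈ s, N.Normal ∧ SSr N) →
      (s.inf id).Normal ∧ SSr (s.inf id) := by
    intro s
    induction s using Finset.induction_on with
    | empty => intro _; exact ⟨by simp only [Finset.inf_empty]; infer_instance, ssr_top⟩
    | insert a s _ ih =>
      intro h
      have h1 := h a (Finset.mem_insert_self _ _)
      have h2 := ih (fun N hN => h N (Finset.mem_insert_of_mem hN))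
      rw [Finset.inf_insert]
      have := h1.1
      have := h2.1
      exact ⟨inferInstanceAs (a ⊓ s.inf id).Normal, h1.2.inf h2.1 h2.2⟩
  have hfin : {N : Subgroup G | ∃ hN : N.Normal, haveI := hN; IsSupersoluble (G ⧸ N)}.Finite :=
    Set.toFinite _
  have heq : ssResidual G = hfin.toFinset.inf id := by
    unfold ssResidual
    rw [Finset.inf_eq_iInf]
    simp
  rw [heq]
  apply key
  intro N hN
  obtain ⟨hN, h⟩ := hfin.mem_toFinset.1 hN
  exact ⟨hN, (ss_quot_iff N).1 h⟩

theorem res_normal (G : Type*) [Group G] [Finite G] : (ssResidual G).Normal := (res_spec G).1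

theorem ssr_iff {G : Type*} [Group G] [Finite G] {N : Subgroup G} (hN : N.Normal) :
    SSr N ↔ ssResidual G ≤ N :=
  ⟨fun h => h.res_le hN, fun h => (res_spec G).2.mono hN h⟩

theorem ss_iff_res {G : Type*} [Group G] [Finite G] : IsSupersoluble G ↔ ssResidual G = ⊥ := by
  rw [ss_iff, ssr_iff inferInstance, le_bot_iff]

theorem res_map {K G : Type*} [Group K] [Group G] [Finite K] [Finite G] (f : K →* G)
    (hf : Function.Surjective f) : ssResidual G = (ssResidual K).map f := by
  apply le_antisymm
  · exact ((res_spec K).2.map f hf).res_le ((res_normal K).map f hf)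
  · rw [Subgroup.map_le_iff_le_comap]
    exact ((res_spec G).2.comap f).res_le ((res_normal G).comap f)

theorem res_sub {K G : Type*} [Group K] [Group G] [Finite K] [Finite G] (f : K →* G) :
    (ssResidual K).map f ≤ ssResidual G := by
  rw [Subgroup.map_le_iff_le_comap]
  exact ((res_spec G).2.comap f).res_le ((res_normal G).comap f)

theorem res_le_of_sup {G : Type*} [Group G] [Finite G] {X N : Subgroup G} (hN : N.Normal)
    (hX : IsSupersoluble X) (h : X ⊔ N = ⊤) : ssResidual G ≤ N := by
  rw [← ssr_iff hN, ← ss_quot_iff]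
  refine ss_of_surj ((QuotientGroup.mk' N).comp X.subtype) ?_ hX
  intro q
  obtain ⟨g, rfl⟩ := QuotientGroup.mk'_surjective N q
  have : g ∈ X ⊔ N := h ▸ Subgroup.mem_top g
  obtain ⟨x, hx, n, hn, rfl⟩ := Subgroup.mem_sup_of_normal_right.1 this
  refine ⟨⟨x, hx⟩, ?_⟩
  simp [hn]

/-- cyclic normal extension -/
theorem ss_of_step {G : Type*} [Group G] {A B : Subgroup G} (h : SStep A B) (h' : SSr B) : SSr A :=
  Relation.ReflTransGen.head h h'

theorem coatom_normal_res {G : Type*} [Group G] [Finite G] {M : Subgroup G} (hM : IsCoatom M)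
    (hn : M.Normal) : ssResidual G ≤ M := by
  rw [← ssr_iff hn]
  refine ss_of_step (B := ⊤) ⟨hn, inferInstance, le_top, ?_⟩ ssr_top
  obtain ⟨b, -, hb⟩ := SetLike.exists_of_lt hM.lt_top
  refine ⟨b, trivial, fun x _ => ?_⟩
  have : M ⊔ Subgroup.zpowers b = ⊤ := hM.2 _ (left_lt_sup.2 (by simpa using hb))
  have hx : x ∈ M ⊔ Subgroup.zpowers b := this ▸ Subgroup.mem_top x
  obtain ⟨m, hm, _, ⟨n, rfl⟩, rfl⟩ := Subgroup.mem_sup_of_normal_left.1 hx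
  exact ⟨-n, by simpa using hm⟩

theorem prime_step {G : Type*} [Group G] [Finite G] {N : Subgroup G} (hN : N.Normal)
    (hp : (Nat.card N).Prime) : SStep ⊥ N := by
  have := Fact.mk hp
  have : IsCyclic N := isCyclic_of_prime_card rfl
  obtain ⟨g, hg⟩ := this
  refine ⟨inferInstance, hN, bot_le, g, g.2, fun x hx => ?_⟩
  obtain ⟨n, hn⟩ := hg ⟨x, hx⟩
  have : (g : G) ^ n = x := congrArg Subtype.val hn
  exact ⟨-n, by simp [this]⟩

theorem IsMinimalNormal.exists_le {G : Type*} [Group G] [Finite G] (N : Subgroup G)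
    (hN : N.Normal) (hne : N ≠ ⊥) : ∃ M, IsMinimalNormal M ∧ M ≤ N := by
  have hfin : {M : Subgroup G | M.Normal ∧ M ≠ ⊥ ∧ M ≤ N}.Finite := Set.toFinite _
  obtain ⟨M, hM⟩ := hfin.exists_minimal ⟨N, hN, hne, le_rfl⟩
  refine ⟨M, ⟨hM.prop.1, hM.prop.2.1, fun K hK hKM hK0 => ?_⟩, hM.prop.2.2⟩
  exact hM.eq_of_le ⟨hK, hK0, hKM.trans hM.prop.2.2⟩ hKM

/-- nontrivial normal subgroup of a supersoluble group contains a normal subgroup of prime order -/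
theorem ss_prime_normal {G : Type*} [Group G] [Finite G] (h : IsSupersoluble G)
    (V : Subgroup G) (hV : V.Normal) (hne : V ≠ ⊥) :
    ∃ N : Subgroup G, N.Normal ∧ N ≤ V ∧ (Nat.card N).Prime := by
  obtain ⟨M, hM, hMV⟩ := IsMinimalNormal.exists_le V hV hne
  rw [ss_iff] at h
  suffices hh : (Nat.card M).Prime from ⟨M, hM.1, hMV, hh⟩
  have key : ∀ A : Subgroup G, SSr A → A ⊓ M = ⊥ → (Nat.card M).Prime := by
    intro A hA
    induction hA using Relation.ReflTransGen.head_induction_on with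
    | refl => intro h; rw [top_inf_eq] at h; exact (hM.2.1 h).elim
    | @head A B hs _ ih =>
      intro h0
      by_cases hBM : B ⊓ M = ⊥
      · exact ih hBM
      have hs' := hs.inf M hM.1
      have hBM' := hM.2.2 _ hs'.2.1 inf_le_right hBM
      rw [h0, hBM'] at hs'
      obtain ⟨-, -, -, b, hb, hb'⟩ := hs'
      have hz : M = Subgroup.zpowers b := by
        apply le_antisymm
        · intro x hx
          obtain ⟨n, hn⟩ := hb' x hx
          rw [Subgroup.mem_bot] at hn
          rw [eq_inv_of_mul_eq_one_left hn]
          exact inv_mem (Subgroup.zpow_mem_zpowers b n)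
        · simpa using hb
      have hMn : Nat.card M ≠ 1 := by
        intro h; exact hM.2.1 (Subgroup.card_eq_one.1 h)
      obtain ⟨p, hp, hpd⟩ := Nat.exists_prime_and_dvd hMn
      obtain ⟨k, hk⟩ := hpd
      have hob : orderOf b = p * k := by rw [← hk, hz, Nat.card_zpowers]
      have hk0 : k ≠ 0 := by
        rintro rfl
        exact (Nat.card_pos (α := M)).ne' (by simpa using hk)
      have hok : orderOf (b ^ k) = p := by
        rw [orderOf_pow_of_dvd hk0 ⟨p, by rw [hob, mul_comm]⟩, hob]
        exact Nat.mul_div_cancel _ (Nat.pos_of_ne_zero hk0)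
      have hnorm : (Subgroup.zpowers (b ^ k)).Normal := by
        constructor
        rintro _ ⟨n, rfl⟩ g
        have hc : g * b * g⁻¹ ∈ Subgroup.zpowers b := hz ▸ hM.1.conj_mem b hb g
        obtain ⟨j, hj⟩ := hc
        simp only at hj
        refine ⟨j * n, ?_⟩
        simp only
        have : g * ((b ^ k) ^ n) * g⁻¹ = (((g * b * g⁻¹) ^ k) ^ n) := by
          rw [conj_pow, conj_zpow]
        rw [this, ← hj]
        simp only [← zpow_natCast, ← zpow_mul]
        congr 1; ring
      have hle : Subgroup.zpowers (b ^ k) ≤ M := by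
        rw [Subgroup.zpowers_le]; exact M.pow_mem hb k
      have := hM.2.2 _ hnorm hle (by
        intro h
        rw [Subgroup.zpowers_eq_bot] at h
        rw [h, orderOf_one] at hok
        exact hp.one_lt.ne hok)
      rw [← this, Nat.card_zpowers, hok]
      exact hp
  exact key ⊥ h (by simp)

theorem ss_minimal_prime {G : Type*} [Group G] [Finite G] (h : IsSupersoluble G)
    (N : Subgroup G) (hN : IsMinimalNormal N) : (Nat.card N).Prime := by
  obtain ⟨M, hM, hMN, hp⟩ := ss_prime_normal h N hN.1 hN.2.1
  have : M = N := hN.2.2 M hM hMN (by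
    rintro rfl
    rw [Subgroup.card_bot] at hp
    exact Nat.not_prime_one hp)
  exact this ▸ hp

theorem ss_solvable {G : Type*} [Group G] (h : IsSupersoluble G) : Group.IsSolvable G := by
  rw [ss_iff] at h
  have key : ∀ A : Subgroup G, SSr A → ∃ n, derivedSeries G n ≤ A := by
    intro A hA
    induction hA using Relation.ReflTransGen.head_induction_on with
    | refl => exact ⟨0, le_top⟩
    | @head A B hs _ ih =>
      obtain ⟨n, hn⟩ := ih
      refine ⟨n + 1, ?_⟩
      rw [derivedSeries_succ, Subgroup.commutator_le]
      intro x hx y hy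
      obtain ⟨hA, hB, hAB, b, hb, h⟩ := hs
      obtain ⟨i, hi⟩ := h x (hn hx)
      obtain ⟨j, hj⟩ := h y (hn hy)
      apply (QuotientGroup.eq_one_iff (N := A) _).1
      have hi' := (QuotientGroup.eq_one_iff _).2 hi
      have hj' := (QuotientGroup.eq_one_iff _).2 hj
      rw [QuotientGroup.mk_mul, QuotientGroup.mk_zpow] at hi' hj'
      rw [commutatorElement_def]
      rw [QuotientGroup.mk_mul, QuotientGroup.mk_mul, QuotientGroup.mk_mul, QuotientGroup.mk_inv,
        QuotientGroup.mk_inv]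
      rw [eq_inv_of_mul_eq_one_left hi', eq_inv_of_mul_eq_one_left hj', ← zpow_neg, ← zpow_neg]
      group
  obtain ⟨n, hn⟩ := key _ h
  exact ⟨n, le_bot_iff.1 hn⟩


theorem mem_of_coprime {G : Type*} [Group G] [Finite G] {N : Subgroup G} (hN : N.Normal) (x : G)
    (h : (orderOf x).Coprime N.index) : x ∈ N := by
  apply (QuotientGroup.eq_one_iff x).1
  have h1 := orderOf_map_dvd (QuotientGroup.mk' N) x
  have h2 : orderOf (QuotientGroup.mk' N x) ∣ N.index := orderOf_dvd_natCard _
  have := Nat.dvd_gcd h1 h2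
  rw [h] at this
  exact orderOf_eq_one_iff.1 (Nat.dvd_one.1 this)

theorem le_of_coprime {G : Type*} [Group G] [Finite G] {N : Subgroup G} (hN : N.Normal)
    (H : Subgroup G)
    (h : (Nat.card H).Coprime N.index) : H ≤ N := by
  intro x hx
  apply mem_of_coprime hN
  exact Nat.Coprime.of_dvd_left (Subgroup.orderOf_dvd_natCard H hx) h

theorem hall_char {G : Type*} [Group G] [Finite G] {K : Subgroup G} (hK : K.Normal)
    {L : Subgroup K} (hL : L.Normal) (h : (Nat.card L).Coprime L.index) :
    (L.map K.subtype).Normal := by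
  constructor
  rintro _ ⟨x, hx, rfl⟩ g
  refine ⟨⟨g * x * g⁻¹, hK.conj_mem x x.2 g⟩, ?_, rfl⟩
  apply mem_of_coprime hL
  have : orderOf (⟨g * x * g⁻¹, hK.conj_mem x x.2 g⟩ : K) = orderOf x := by
    rw [← Subgroup.orderOf_coe, ← Subgroup.orderOf_coe]
    exact orderOf_injective (MulAut.conj g).toMonoidHom (MulAut.conj g).injective (x : G)
  rw [this]
  exact Nat.Coprime.of_dvd_left (Subgroup.orderOf_dvd_natCard L hx) h

/-- automorphism group of a group of prime order -/
theorem autEquiv {N : Type*} [Group N] {p : ℕ} (hp : p.Prime) (h : Nat.card N = p) :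
    Nonempty (MulAut N ≃* (ZMod p)ˣ) := by
  have := Fact.mk hp
  have : IsCyclic N := isCyclic_of_prime_card h
  subst h
  exact ⟨IsCyclic.mulAutMulEquiv N⟩

theorem mem_cent_iff {G : Type*} [Group G] {N : Subgroup G} [N.Normal] (x : G) :
    (MulAut.conjNormal x : MulAut N) = 1 ↔ x ∈ Subgroup.centralizer (N : Set G) := by
  rw [Subgroup.mem_centralizer_iff]
  constructor
  · intro h y hy
    have := congrArg Subtype.val (DFunLike.congr_fun h ⟨y, hy⟩)
    rw [MulAut.conjNormal_apply] at this
    simp only [MulAut.one_apply] at this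
    rw [mul_inv_eq_iff_eq_mul] at this
    exact this.symm
  · intro h
    ext y
    rw [MulAut.conjNormal_apply]
    simp only [MulAut.one_apply]
    rw [← h y y.2]; simp

theorem cent_prime {G : Type*} [Group G] [Finite G] {N : Subgroup G} (hN : N.Normal) {p : ℕ}
    (hp : p.Prime) (h : Nat.card N = p) (x : G) (m : ℕ) (hm : m.Coprime (p - 1))
    (hx : x ^ m ∈ Subgroup.centralizer (N : Set G)) : x ∈ Subgroup.centralizer (N : Set G) := by
  rw [← mem_cent_iff] at *
  rw [map_pow] at hx
  have hcard : Nat.card (MulAut N) = p - 1 := by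
    obtain ⟨e⟩ := autEquiv hp h
    have := Fact.mk hp
    rw [Nat.card_congr e.toEquiv, Nat.card_eq_fintype_card, ZMod.card_units]
  have h1 := orderOf_dvd_of_pow_eq_one hx
  have h2 := orderOf_dvd_natCard (MulAut.conjNormal x : MulAut N)
  rw [hcard] at h2
  have := Nat.dvd_gcd h1 h2
  rw [hm] at this
  exact orderOf_eq_one_iff.1 (Nat.dvd_one.1 this)

theorem comm_of_prime {G : Type*} [Group G] {N : Subgroup G} {p : ℕ} (hp : p.Prime)
    (h : Nat.card N = p) : N ≤ Subgroup.centralizer (N : Set G) := by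
  have := Fact.mk hp
  have : IsCyclic N := isCyclic_of_prime_card h
  intro x hx
  rw [Subgroup.mem_centralizer_iff]
  intro y hy
  have := (IsCyclic.commGroup (α := N)).mul_comm ⟨y, hy⟩ ⟨x, hx⟩
  exact congrArg Subtype.val this

theorem tower_aux (k : ℕ) (n : ℕ) : ∀ (G : Type u) [Group G] [Finite G], Nat.card G = n →
    IsSupersoluble G → ∃ N : Subgroup G, N.Normal ∧ (∀ p, p.Prime → p ∣ Nat.card N → k ≤ p) ∧
      (∀ p, p.Prime → p ∣ N.index → p < k) := by
  induction n using Nat.strong_induction_on with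
  | _ n ih =>
  intro G _ _ hn hG
  by_cases hbt : (⊤ : Subgroup G) = ⊥
  · refine ⟨⊥, inferInstance, ?_, ?_⟩
    · intro p hp h; rw [Subgroup.card_bot] at h; exact (hp.one_lt.ne' (Nat.dvd_one.1 h)).elim
    · intro p hp h
      rw [← hbt, Subgroup.index_top] at h; exact (hp.one_lt.ne' (Nat.dvd_one.1 h)).elim
  obtain ⟨N0, hN0, -, hr⟩ := ss_prime_normal hG ⊤ inferInstance hbt
  obtain ⟨r, hrr⟩ : ∃ r, Nat.card N0 = r := ⟨_, rfl⟩
  rw [hrr] at hr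
  have hcG := Subgroup.card_mul_index N0
  have hlt : Nat.card (G ⧸ N0) < n := by
    rw [← hn, ← hcG, hrr]
    have : 0 < Nat.card (G ⧸ N0) := Nat.card_pos
    change _ < r * Nat.card (G ⧸ N0)
    nlinarith [hr.two_le]
  obtain ⟨K', hK', h1, h2⟩ := ih _ hlt (G ⧸ N0) rfl
    (ss_of_surj _ (QuotientGroup.mk'_surjective N0) hG)
  obtain ⟨K, hK⟩ : ∃ K, K = K'.comap (QuotientGroup.mk' N0) := ⟨_, rfl⟩
  have hKn : K.Normal := by rw [hK]; exact hK'.comap _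
  have hKi : K.index = K'.index := by
    rw [hK, Subgroup.index_comap_of_surjective _ (QuotientGroup.mk'_surjective N0)]
  have hN0K : N0 ≤ K := by
    intro x hx
    rw [hK, Subgroup.mem_comap]
    have : QuotientGroup.mk' N0 x = 1 := (QuotientGroup.eq_one_iff x).2 hx
    rw [this]; exact one_mem _
  have hKc : Nat.card K = r * Nat.card K' := by
    have e1 := Subgroup.card_mul_index K
    have e2 := Subgroup.card_mul_index K'
    have e3 : N0.index = Nat.card (G ⧸ N0) := rfl
    rw [← hcG, e3, ← e2, hKi, hrr, ← mul_assoc] at e1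
    exact Nat.eq_of_mul_eq_mul_right (Nat.pos_of_ne_zero Subgroup.index_ne_zero_of_finite) e1
  by_cases hrk : k ≤ r
  · refine ⟨K, hKn, ?_, ?_⟩
    · intro p hp hd
      rw [hKc, hp.dvd_mul] at hd
      rcases hd with hd | hd
      · rw [(Nat.prime_dvd_prime_iff_eq hp hr).1 hd]; exact hrk
      · exact h1 p hp hd
    · rw [hKi]; exact h2
  push Not at hrk
  have hcop : (Nat.card K').Coprime (r - 1) := by
    apply Nat.coprime_of_dvd
    intro p hp hd hd2
    have := h1 p hp hd
    have := Nat.le_of_dvd (by have := hr.two_le; omega) hd2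
    omega
  have hcop2 : (Nat.card K').Coprime r := by
    apply Nat.coprime_of_dvd
    intro p hp hd hd2
    have := h1 p hp hd
    have := Nat.le_of_dvd hr.pos hd2
    omega
  have hcent : K ≤ Subgroup.centralizer (N0 : Set G) := by
    intro x hx
    apply cent_prime hN0 hr hrr x _ hcop
    apply comm_of_prime hr hrr
    apply (QuotientGroup.eq_one_iff _).1
    have hx' : QuotientGroup.mk' N0 x ∈ K' := by rw [hK] at hx; exact hx
    have := pow_card_eq_one' (x := (⟨_, hx'⟩ : K'))
    exact congrArg Subtype.val this
  have hN0' : (N0.subgroupOf K).Normal := hN0.subgroupOf K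
  have hc1 : Nat.card (N0.subgroupOf K) = r := by
    rw [← hrr]; exact Nat.card_congr (Subgroup.subgroupOfEquivOfLe hN0K).toEquiv
  have hi1 : (N0.subgroupOf K).index = Nat.card K' := by
    have := Subgroup.card_mul_index (N0.subgroupOf K)
    rw [hc1, hKc] at this
    exact Nat.eq_of_mul_eq_mul_left hr.pos this
  obtain ⟨L, hL⟩ := Subgroup.exists_right_complement'_of_coprime (N := N0.subgroupOf K)
    (by rw [hc1, hi1]; exact hcop2.symm)
  have hLi : L.index = r := by rw [hL.index_eq_card, hc1]
  have hLc : Nat.card L = Nat.card K' := by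
    have := hL.symm.index_eq_card
    rw [← this, hi1]
  have hLn : L.Normal := by
    constructor
    intro l hl g
    have hg : g ∈ N0.subgroupOf K ⊔ L := by rw [hL.sup_eq_top]; trivial
    obtain ⟨a, ha, b, hb, rfl⟩ := Subgroup.mem_sup_of_normal_left.1 hg
    have hbl : b * l * b⁻¹ ∈ L := mul_mem (mul_mem hb hl) (inv_mem hb)
    have hcomm : a * (b * l * b⁻¹) = (b * l * b⁻¹) * a := by
      have := Subgroup.mem_centralizer_iff.1 (hcent (b * l * b⁻¹).2) a (Subgroup.mem_subgroupOf.1 ha)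
      exact Subtype.ext this
    have : a * b * l * (a * b)⁻¹ = b * l * b⁻¹ := by
      calc a * b * l * (a * b)⁻¹ = a * (b * l * b⁻¹) * a⁻¹ := by group
        _ = _ := by rw [hcomm]; group
    rw [this]; exact hbl
  refine ⟨L.map K.subtype, hall_char hKn hLn (by rw [hLc, hLi]; exact hcop2), ?_, ?_⟩
  · intro p hp hd
    rw [Subgroup.card_map_of_injective K.subtype_injective, hLc] at hd
    exact h1 p hp hd
  · intro p hp hd
    rw [Subgroup.index_map_subtype, hLi, hp.dvd_mul] at hd
    rcases hd with hd | hd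
    · rw [(Nat.prime_dvd_prime_iff_eq hp hr).1 hd]; exact hrk
    · rw [hKi] at hd; exact h2 p hp hd

theorem tower {G : Type*} [Group G] [Finite G] (hG : IsSupersoluble G) (k : ℕ) :
    ∃ N : Subgroup G, N.Normal ∧ (∀ p, p.Prime → p ∣ Nat.card N → k ≤ p) ∧
      (∀ p, p.Prime → p ∣ N.index → p < k) := tower_aux k _ G rfl hG

theorem tower_cop {G : Type*} [Group G] {k : ℕ} {N : Subgroup G}
    (h1 : ∀ p, p.Prime → p ∣ Nat.card N → k ≤ p)
    (h2 : ∀ p, p.Prime → p ∣ N.index → p < k) : (Nat.card N).Coprime N.index := by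
  apply Nat.coprime_of_dvd
  intro p hp hd hd2
  have := h1 p hp hd
  have := h2 p hp hd2
  omega


open scoped commutatorElement

def Dp (p : ℕ) (G : Type*) [Group G] : Subgroup G := ⨅ f : G →* (ZMod p)ˣ, f.ker

theorem mem_Dp {p : ℕ} {G : Type*} [Group G] {x : G} :
    x ∈ Dp p G ↔ ∀ f : G →* (ZMod p)ˣ, f x = 1 := by
  unfold Dp; simp [Subgroup.mem_iInf, MonoidHom.mem_ker]

theorem Dp_normal (p : ℕ) (G : Type*) [Group G] : (Dp p G).Normal := by
  constructor
  intro x hx g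
  rw [mem_Dp] at *
  intro f; simp [hx f]

theorem Dp_pow {p : ℕ} (hp : p.Prime) {G : Type*} [Group G] (x : G) : x ^ (p - 1) ∈ Dp p G := by
  have := Fact.mk hp
  rw [mem_Dp]; intro f
  rw [map_pow]; exact ZMod.units_pow_card_sub_one_eq_one p _

theorem Dp_pelt {p : ℕ} (hp : p.Prime) {G : Type*} [Group G] (x : G) (n : ℕ)
    (hx : x ^ p ^ n = 1) : x ∈ Dp p G := by
  have := Fact.mk hp
  rw [mem_Dp]; intro f
  have h1 : f x ^ p ^ n = 1 := by rw [← map_pow, hx, map_one]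
  have h2 : f x ^ (p - 1) = 1 := ZMod.units_pow_card_sub_one_eq_one p _
  have h3 : (p ^ n).Coprime (p - 1) := by
    apply Nat.Coprime.pow_left
    rw [Nat.coprime_self_sub_right hp.one_lt.le]; exact Nat.coprime_one_right _
  have := Nat.dvd_gcd (orderOf_dvd_of_pow_eq_one h1) (orderOf_dvd_of_pow_eq_one h2)
  rw [h3] at this
  exact orderOf_eq_one_iff.1 (Nat.dvd_one.1 this)

theorem Dp_comm {p : ℕ} {G : Type*} [Group G] (x y : G) : x⁻¹ * y⁻¹ * x * y ∈ Dp p G := by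
  rw [mem_Dp]; intro f
  simp only [map_mul, map_inv]
  rw [mul_assoc ((f x)⁻¹), mul_comm (f y)⁻¹ (f x)]; simp

theorem Dp_map {p : ℕ} {G K : Type*} [Group G] [Group K] (φ : G →* K) {x : G} (hx : x ∈ Dp p G) :
    φ x ∈ Dp p K := by
  rw [mem_Dp] at *
  exact fun f => hx (f.comp φ)

theorem Dp_cent {p : ℕ} (hp : p.Prime) {G : Type*} [Group G] {N : Subgroup G} (hN : N.Normal)
    (h : Nat.card N = p) : Dp p G ≤ Subgroup.centralizer (N : Set G) := by
  intro x hx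
  rw [← mem_cent_iff]
  obtain ⟨e⟩ := autEquiv hp h
  have := mem_Dp.1 hx (e.toMonoidHom.comp MulAut.conjNormal)
  exact e.map_eq_one_iff.1 this

theorem dp_coprime_aux {p : ℕ} (hp : p.Prime) (n : ℕ) : ∀ (G : Type u) [Group G] [Finite G],
    Nat.card G = n → IsSupersoluble G → ∀ (P : Subgroup G), P.Normal → IsPGroup p P →
    ∀ k ∈ Dp p G, (orderOf k).Coprime p → ∀ x ∈ P, k * x = x * k := by
  induction n using Nat.strong_induction_on with
  | _ n ih =>
  intro G _ _ hn hG P hP hPp k hk hkp x hx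
  by_cases hbt : (⊤ : Subgroup G) = ⊥
  · have h : ∀ g : G, g = 1 := fun g => by
      have : g ∈ (⊤ : Subgroup G) := trivial
      rw [hbt] at this; exact Subgroup.mem_bot.1 this
    rw [h k, h x]
  obtain ⟨N0, hN0, -, hr⟩ := ss_prime_normal hG ⊤ inferInstance hbt
  have hcG := Subgroup.card_mul_index N0
  have hlt : Nat.card (G ⧸ N0) < n := by
    rw [← hn, ← hcG]
    have : 0 < Nat.card (G ⧸ N0) := Nat.card_pos
    change _ < _ * Nat.card (G ⧸ N0)
    nlinarith [hr.two_le]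
  have h1 := ih _ hlt (G ⧸ N0) rfl (ss_of_surj _ (QuotientGroup.mk'_surjective N0) hG)
    (P.map (QuotientGroup.mk' N0)) (hP.map _ (QuotientGroup.mk'_surjective N0)) (hPp.map _)
    (QuotientGroup.mk' N0 k) (Dp_map _ hk)
    (Nat.Coprime.of_dvd_left (orderOf_map_dvd _ k) hkp) (QuotientGroup.mk' N0 x) ⟨x, hx, rfl⟩
  obtain ⟨y, hy⟩ : ∃ y, y = x⁻¹ * (k * x * k⁻¹) := ⟨_, rfl⟩
  have hyN : y ∈ N0 := by
    apply (QuotientGroup.eq_one_iff (N := N0) _).1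
    change QuotientGroup.mk' N0 y = 1
    rw [hy]
    simp only [map_mul, map_inv]
    rw [h1]; group
  have hyP : y ∈ P := by
    rw [hy]; exact mul_mem (inv_mem hx) (hP.conj_mem x hx k)
  suffices hy1 : y = 1 by
    rw [hy1] at hy
    have := eq_of_inv_mul_eq_one hy.symm
    nth_rw 2 [this]; group
  obtain ⟨a, ha⟩ : ∃ a, y ^ p ^ a = 1 := by
    obtain ⟨a, ha⟩ := hPp ⟨y, hyP⟩
    exact ⟨a, congrArg Subtype.val ha⟩
  have fin : ∀ m : ℕ, m.Coprime p → y ^ m = 1 → y = 1 := by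
    intro m hm h
    have := Nat.dvd_gcd (orderOf_dvd_of_pow_eq_one h) (orderOf_dvd_of_pow_eq_one ha)
    rw [hm.pow_right a] at this
    exact orderOf_eq_one_iff.1 (Nat.dvd_one.1 this)
  by_cases hrp : Nat.card N0 = p
  · have hc := Subgroup.mem_centralizer_iff.1 (Dp_cent hp hN0 hrp hk) y hyN
    have hind : ∀ j : ℕ, k ^ j * x * (k ^ j)⁻¹ = x * y ^ j := by
      intro j
      induction j with
      | zero => simp
      | succ j ih =>
        have hcj : k * y ^ j * k⁻¹ = y ^ j := by
          have : Commute y k := hc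
          rw [← (this.pow_left j).eq]; group
        calc k ^ (j + 1) * x * (k ^ (j + 1))⁻¹ = k * (k ^ j * x * (k ^ j)⁻¹) * k⁻¹ := by
              rw [pow_succ']; group
          _ = (k * x * k⁻¹) * (k * y ^ j * k⁻¹) := by rw [ih]; group
          _ = x * y ^ (j + 1) := by
              rw [hcj, pow_succ', ← mul_assoc]
              congr 1
              rw [hy]; group
    have := hind (orderOf k)
    rw [pow_orderOf_eq_one] at this
    apply fin _ hkp
    simpa using this
  · apply fin (Nat.card N0)
    · exact (Nat.coprime_primes hr hp).2 hrp
    · have := pow_card_eq_one' (x := (⟨y, hyN⟩ : N0))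
      exact congrArg Subtype.val this

theorem dp_coprime {p : ℕ} (hp : p.Prime) {G : Type*} [Group G] [Finite G] (hG : IsSupersoluble G)
    {P : Subgroup G} (hP : P.Normal) (hPp : IsPGroup p P) {k : G} (hk : k ∈ Dp p G)
    (hkp : (orderOf k).Coprime p) {x : G} (hx : x ∈ P) : k * x = x * k :=
  dp_coprime_aux hp _ G rfl hG P hP hPp k hk hkp x hx

theorem minnormal_comm {G : Type*} [Group G] {N : Subgroup G} (hN : IsMinimalNormal N)
    (hs : Group.IsSolvable N) : ∀ x ∈ N, ∀ y ∈ N, x * y = y * x := by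
  have hNn := hN.1
  have h1 : ⁅N, N⁆ = ⊥ := by
    by_contra hne
    have := hN.2.2 ⁅N, N⁆ inferInstance (Subgroup.commutator_le_left N N) hne
    have hnt : Nontrivial N := (Subgroup.nontrivial_iff_ne_bot N).2 hN.2.1
    have hlt := Group.IsSolvable.commutator_lt_top_of_nontrivial N
    apply hlt.ne
    apply Subgroup.map_injective N.subtype_injective
    rw [Subgroup.map_subtype_commutator, this, ← MonoidHom.range_eq_map, Subgroup.range_subtype]
  intro x hx y hy
  have : ⁅x, y⁆ ∈ ⁅N, N⁆ := Subgroup.commutator_mem_commutator hx hy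
  rw [h1, Subgroup.mem_bot] at this
  exact commutatorElement_eq_one_iff_mul_comm.1 this

theorem minnormal_exp {G : Type*} [Group G] [Finite G] {N : Subgroup G} (hN : IsMinimalNormal N)
    (hs : ∀ x ∈ N, ∀ y ∈ N, x * y = y * x) : ∃ p, p.Prime ∧ ∀ x ∈ N, x ^ p = 1 := by
  have hMn : Nat.card N ≠ 1 := by
    intro h; exact hN.2.1 (Subgroup.card_eq_one.1 h)
  obtain ⟨p, hp, hpd⟩ := Nat.exists_prime_and_dvd hMn
  have := Fact.mk hp
  refine ⟨p, hp, ?_⟩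
  let E : Subgroup G :=
    { carrier := {x | x ∈ N ∧ x ^ p = 1}
      one_mem' := ⟨one_mem _, one_pow _⟩
      mul_mem' := by
        rintro a b ⟨ha, ha'⟩ ⟨hb, hb'⟩
        refine ⟨mul_mem ha hb, ?_⟩
        have : Commute a b := hs a ha b hb
        rw [this.mul_pow, ha', hb', one_mul]
      inv_mem' := by
        rintro a ⟨ha, ha'⟩
        exact ⟨inv_mem ha, by rw [inv_pow, ha', inv_one]⟩ }
  have hE : E = N := by
    apply hN.2.2
    · constructor
      rintro x ⟨hx, hx'⟩ g
      refine ⟨hN.1.conj_mem x hx g, ?_⟩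
      rw [conj_pow, hx']; simp
    · exact fun x hx => hx.1
    · obtain ⟨x, hx⟩ := exists_prime_orderOf_dvd_card' p hpd
      intro h
      have hxE : (x : G) ∈ E := by
        refine ⟨x.2, ?_⟩
        have : x ^ p = 1 := by rw [← hx]; exact pow_orderOf_eq_one x
        exact congrArg Subtype.val this
      rw [h, Subgroup.mem_bot] at hxE
      have : x = 1 := Subtype.ext hxE
      rw [this, orderOf_one] at hx
      exact hp.one_lt.ne hx
  intro x hx
  rw [← hE] at hx
  exact hx.2

open Polynomial in
theorem eigen_aux {A : Type*} [AddCommGroup A] [Nontrivial A] {p : ℕ} (hp : p.Prime)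
    [Module (ZMod p) A] (T : A →+ A) (hT : ∀ x, T^[p] x = T x) :
    ∃ n : ℕ, ∃ v : A, v ≠ 0 ∧ T v = n • v := by
  have := Fact.mk hp
  let L : Module.End (ZMod p) A := T.toZModLinearMap p
  by_contra! hcon
  have h1 : ∀ s : Finset (ZMod p), ∀ v : A, (aeval L (∏ a ∈ s, (X - C a)) : A →ₗ[ZMod p] A) v = 0 → v = 0 := by
    intro s
    induction s using Finset.induction_on with
    | empty => simp
    | insert a s ha ih =>
      rw [Finset.prod_insert ha, map_mul]
      intro v hv
      apply ih
      change (aeval L (X - C a) : A →ₗ[ZMod p] A) ((aeval L (∏ a ∈ s, (X - C a)) : A →ₗ[ZMod p] A) v) = 0 at hv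
      generalize (aeval L (∏ a ∈ s, (X - C a)) : A →ₗ[ZMod p] A) v = v at hv
      by_contra hv0
      apply hcon a.val v hv0
      rw [map_sub, aeval_X, aeval_C, LinearMap.sub_apply, sub_eq_zero] at hv
      change T v = _ at hv
      rw [hv, Module.algebraMap_end_apply, ← Nat.cast_smul_eq_nsmul (ZMod p), ZMod.natCast_zmod_val]
  have h2 : (∏ a : ZMod p, (X - C a)) = X ^ p - X := by
    have hr := FiniteField.roots_X_pow_card_sub_X (ZMod p)
    rw [ZMod.card] at hr
    have hmon : (X ^ p - X : (ZMod p)[X]).Monic := by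
      apply monic_X_pow_sub
      rw [degree_X]; exact_mod_cast hp.one_lt
    have := prod_multiset_X_sub_C_of_monic_of_roots_card_eq hmon (by
      rw [hr, FiniteField.X_pow_card_sub_X_natDegree_eq _ hp.one_lt]
      simp [ZMod.card])
    rw [hr] at this
    exact this
  have h3 := h1 Finset.univ
  rw [h2] at h3
  obtain ⟨v, hv⟩ := exists_ne (0 : A)
  apply hv
  apply h3
  rw [map_sub, map_pow, aeval_X, LinearMap.sub_apply, sub_eq_zero]
  rw [Module.End.pow_apply]
  exact hT v

theorem eigen {A : Type*} [AddCommGroup A] [Nontrivial A] {p : ℕ} (hp : p.Prime)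
    (hA : ∀ x : A, p • x = 0) (T : A →+ A) (hT : ∀ x, T^[p] x = T x) :
    ∃ n : ℕ, ∃ v : A, v ≠ 0 ∧ T v = n • v := by
  have := Fact.mk hp
  let _ : Module (ZMod p) A := AddCommGroup.zmodModule hA
  exact eigen_aux hp T hT

theorem card_of_Dp_cent {p : ℕ} (hp : p.Prime) {G : Type*} [Group G] [Finite G] {N : Subgroup G}
    (hN : IsMinimalNormal N) (hs : ∀ x ∈ N, ∀ y ∈ N, x * y = y * x) (he : ∀ x ∈ N, x ^ p = 1)
    (hD : ∀ d ∈ Dp p G, ∀ x ∈ N, d * x = x * d) : Nat.card N = p := by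
  have hNn := hN.1
  have hnt : Nontrivial N := (Subgroup.nontrivial_iff_ne_bot N).2 hN.2.1
  let _ : CommGroup N := { (inferInstance : Group N) with
    mul_comm := fun a b => Subtype.ext (hs a a.2 b b.2) }
  have key : ∀ g : G, ∃ n : ℕ, ∀ v ∈ N, g * v * g⁻¹ = v ^ n := by
    intro g
    have hpow : ∀ (j : ℕ) (x : N), ((MulAut.conjNormal g : MulAut N)^[j] x : G) = g ^ j * x * (g ^ j)⁻¹ := by
      intro j x
      induction j with
      | zero => simp
      | succ j ih =>
        rw [Function.iterate_succ_apply', MulAut.conjNormal_apply, ih, pow_succ']; group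
    obtain ⟨n, v, hv, hTv⟩ := eigen (A := Additive N) hp
      (fun x => by
        apply Additive.toMul.injective
        apply Subtype.ext
        exact he _ (Additive.toMul x).2)
      (MonoidHom.toAdditive (MulAut.conjNormal g : MulAut N).toMonoidHom)
      (fun x => by
        apply Additive.toMul.injective
        apply Subtype.ext
        refine (hpow p (Additive.toMul x)).trans ?_
        have hpp : g ^ p = g * g ^ (p - 1) := by rw [← pow_succ', Nat.sub_add_cancel hp.one_le]
        have hg := hD _ (Dp_pow hp g) _ (Additive.toMul x).2
        change _ = ((MulAut.conjNormal g (Additive.toMul x) : N) : G)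
        rw [MulAut.conjNormal_apply, hpp]
        calc g * g ^ (p - 1) * ((Additive.toMul x : N) : G) * (g * g ^ (p - 1))⁻¹
            = g * (g ^ (p - 1) * ((Additive.toMul x : N) : G)) * (g ^ (p - 1))⁻¹ * g⁻¹ := by group
          _ = _ := by rw [hg]; group)
    refine ⟨n, ?_⟩
    let E : Subgroup G :=
      { carrier := {x | x ∈ N ∧ g * x * g⁻¹ = x ^ n}
        one_mem' := ⟨one_mem _, by simp⟩
        mul_mem' := by
          rintro a b ⟨ha, ha'⟩ ⟨hb, hb'⟩
          refine ⟨mul_mem ha hb, ?_⟩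
          have : Commute a b := hs a ha b hb
          rw [this.mul_pow, ← ha', ← hb']; group
        inv_mem' := by
          rintro a ⟨ha, ha'⟩
          exact ⟨inv_mem ha, by rw [inv_pow, ← ha']; group⟩ }
    have hE : E = N := by
      apply hN.2.2
      · constructor
        rintro x ⟨hx, hx'⟩ h
        refine ⟨hN.1.conj_mem x hx h, ?_⟩
        have hc := hD _ (Dp_comm (p := p) g h) x hx
        obtain ⟨c, hcd⟩ : ∃ c, c = g⁻¹ * h⁻¹ * g * h := ⟨_, rfl⟩
        rw [← hcd] at hc
        have e1 : g * h = h * g * c := by rw [hcd]; group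
        calc g * (h * x * h⁻¹) * g⁻¹ = (g * h) * x * (g * h)⁻¹ := by group
          _ = h * g * (c * x) * c⁻¹ * g⁻¹ * h⁻¹ := by rw [e1]; group
          _ = h * (g * x * g⁻¹) * h⁻¹ := by rw [hc]; group
          _ = (h * x * h⁻¹) ^ n := by rw [hx', conj_pow]
      · exact fun x hx => hx.1
      · intro h
        have hvE : ((Additive.toMul v : N) : G) ∈ E := by
          refine ⟨(Additive.toMul v).2, ?_⟩
          have := congrArg (fun z => ((Additive.toMul z : N) : G)) hTv
          simpa using this
        rw [h, Subgroup.mem_bot] at hvE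
        apply hv
        apply Additive.toMul.injective
        exact Subtype.ext hvE
    intro x hx
    rw [← hE] at hx
    exact hx.2
  obtain ⟨v, hv⟩ := exists_ne (1 : N)
  have hz : Subgroup.zpowers (v : G) = N := by
    apply hN.2.2
    · constructor
      rintro _ ⟨j, rfl⟩ g
      obtain ⟨n, hn⟩ := key g
      refine ⟨n * j, ?_⟩
      simp only
      rw [← conj_zpow, hn v v.2, ← zpow_natCast, ← zpow_mul]
    · simp
    · rw [Subgroup.zpowers_ne_bot]
      exact fun h => hv (Subtype.ext h)
  rw [← hz, Nat.card_zpowers]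
  have := Fact.mk hp
  exact orderOf_eq_prime (he v v.2) (fun h => hv (Subtype.ext h))


theorem quot_card_lt {G : Type*} [Group G] [Finite G] {S : Subgroup G} (hS : S ≠ ⊥) :
    Nat.card (G ⧸ S) < Nat.card G := by
  have hcG := Subgroup.card_mul_index S
  have h2 : 1 < Nat.card S := S.one_lt_card_iff_ne_bot.2 hS
  have : 0 < Nat.card (G ⧸ S) := Nat.card_pos
  change _ * Nat.card (G ⧸ S) = _ at hcG
  rw [← hcG]
  nlinarith

theorem ne_bot_of_prime_dvd {G : Type*} [Group G] {S : Subgroup G} {p : ℕ} (hp : p.Prime)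
    (h : p ∣ Nat.card S) : S ≠ ⊥ := by
  rintro rfl
  rw [Subgroup.card_bot] at h
  exact hp.one_lt.ne' (Nat.dvd_one.1 h)

theorem frat_sylow {G : Type*} [Group G] [Finite G] {N : Subgroup G} {q : ℕ} [Fact q.Prime]
    (hNf : N ≤ frattini G) (S : Sylow q G) (hSN : ((S : Subgroup G) ⊔ N).Normal) :
    (S : Subgroup G).Normal := by
  have h1 := S.normalizer_sup_eq_top' (N := (S : Subgroup G) ⊔ N) le_sup_left
  have h0 : (S : Subgroup G) ≤ Subgroup.normalizer (S : Set G) := Subgroup.le_normalizer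
  rw [← sup_assoc, sup_eq_left.2 h0] at h1
  have h2 : Subgroup.normalizer (S : Set G) ⊔ frattini G = ⊤ := by
    rw [eq_top_iff, ← h1]
    exact sup_le_sup_left hNf _
  exact Subgroup.normalizer_eq_top_iff.1 (frattini_nongenerating h2)

theorem avg {G : Type*} [Group G] [Finite G] {p : ℕ} (hp : p.Prime) {N : Subgroup G}
    (hN : N.Normal) (hs : ∀ x ∈ N, ∀ y ∈ N, x * y = y * x) (he : ∀ x ∈ N, x ^ p = 1)
    (L : Subgroup G) (hL : (Nat.card L).Coprime p) (x : G)
    (hx : ∀ k ∈ L, k * x * k⁻¹ * x⁻¹ ∈ N) : ∃ n ∈ N, ∀ k ∈ L, k * (n * x) = (n * x) * k := by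
  classical
  have := Fintype.ofFinite L
  let _ : CommGroup N := { (inferInstance : Group N) with
    mul_comm := fun a b => Subtype.ext (hs a a.2 b b.2) }
  let c : L → N := fun k => ⟨k * x * (k : G)⁻¹ * x⁻¹, hx k k.2⟩
  let ψ : N := ∏ k : L, c k
  have hψ : ∀ k' : L, ψ = MulAut.conjNormal (k' : G) ψ * c k' ^ Nat.card L := by
    intro k'
    have h1 : ∀ k, c (k' * k) = MulAut.conjNormal (k' : G) (c k) * c k' := by
      intro k
      apply Subtype.ext
      rw [Subgroup.coe_mul, MulAut.conjNormal_apply]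
      simp only [c, Subgroup.coe_mul]
      group
    calc ψ = ∏ k : L, c (k' * k) := (Fintype.prod_equiv (Equiv.mulLeft k') _ _ (fun _ => rfl)).symm
      _ = ∏ k : L, (MulAut.conjNormal (k' : G) (c k) * c k') := by simp only [h1]
      _ = _ := by
        rw [Finset.prod_mul_distrib, ← map_prod, Finset.prod_const, Finset.card_univ,
          Nat.card_eq_fintype_card]
  obtain ⟨j, hj⟩ : ∃ j, ∀ y : N, (y ^ Nat.card L) ^ j = y := by
    obtain ⟨j, -, hj⟩ := Nat.exists_mul_mod_eq_one_of_coprime hL hp.one_lt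
    refine ⟨j, fun y => ?_⟩
    have hy : y ^ p = 1 := Subtype.ext (he y y.2)
    rw [← pow_mul, pow_eq_pow_mod _ hy, hj, pow_one]
  refine ⟨(ψ ^ j : N), (ψ ^ j).2, fun k hk => ?_⟩
  have h2 : ψ ^ j = MulAut.conjNormal k (ψ ^ j) * c ⟨k, hk⟩ := by
    conv_lhs => rw [hψ ⟨k, hk⟩]
    rw [mul_pow, hj, map_pow]
  have h3 := congrArg Subtype.val h2
  rw [Subgroup.coe_mul, MulAut.conjNormal_apply] at h3
  simp only [c] at h3
  generalize ((ψ ^ j : N) : G) = n at h3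
  calc k * (n * x) = (k * n * k⁻¹ * (k * x * k⁻¹ * x⁻¹)) * x * k := by group
    _ = _ := by rw [← h3]

theorem thA_aux (n : ℕ) : ∀ (G : Type u) [Group G] [Finite G], Nat.card G = n →
    ssResidual G ≤ frattini G → ssResidual G = ⊥ := by
  induction n using Nat.strong_induction_on with
  | _ n ih =>
  intro G _ _ hn hf
  by_contra hne
  have hR := res_normal G
  have h1 : ∀ S : Subgroup G, S.Normal → S ≠ ⊥ → ssResidual G ≤ S := by
    intro S hS hS0
    have := ih _ (hn ▸ quot_card_lt hS0) (G ⧸ S) rfl (by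
      rw [res_map _ (QuotientGroup.mk'_surjective S), Subgroup.map_le_iff_le_comap]
      exact hf.trans (frattini_le_comap_frattini_of_surjective (QuotientGroup.mk'_surjective S)))
    rw [res_map _ (QuotientGroup.mk'_surjective S), Subgroup.map_eq_bot_iff,
      QuotientGroup.ker_mk'] at this
    exact this
  obtain ⟨N, hNR⟩ : ∃ N, N = ssResidual G := ⟨_, rfl⟩
  rw [← hNR] at hne hR h1 hf
  have hmin : IsMinimalNormal N := ⟨hR, hne, fun M hM hMN hM0 => le_antisymm hMN (h1 M hM hM0)⟩
  have hsolv : Group.IsSolvable N := by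
    have := frattini_nilpotent (G := G)
    exact Group.isSolvable_of_isSolvable_injective (Subgroup.inclusion_injective hf)
  have hcomm := minnormal_comm hmin hsolv
  obtain ⟨p, hp, hexp⟩ := minnormal_exp hmin hcomm
  have hGN : IsSupersoluble (G ⧸ N) := (ss_quot_iff N).2 ((ssr_iff hR).2 hNR.ge)
  -- largest prime
  have hcard1 : Nat.card G ≠ 1 := by
    intro h
    have := (Nat.card_eq_one_iff_unique.1 h).1
    exact hne (Subsingleton.elim _ _)
  obtain ⟨q, hq, hqmax⟩ := (Nat.card G).primeFactors.exists_max_image id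
    (Nat.nonempty_primeFactors.2 (by
      have := Nat.card_pos (α := G); omega))
  have hqp := Nat.prime_of_mem_primeFactors hq
  have hqd := Nat.dvd_of_mem_primeFactors hq
  have hqmax' : ∀ r, r.Prime → r ∣ Nat.card G → r ≤ q := fun r hr hd =>
    hqmax r (Nat.mem_primeFactors.2 ⟨hr, hd, Nat.card_pos.ne'⟩)
  have := Fact.mk hqp
  obtain ⟨K', hK', hK1, hK2⟩ := tower hGN q
  have hKd : Nat.card K' ∣ Nat.card G :=
    (Subgroup.card_subgroup_dvd_card K').trans (Subgroup.index_dvd_card N)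
  have hKq : IsPGroup q K' := IsPGroup.of_card
    (Nat.eq_prime_pow_of_unique_prime_dvd Nat.card_pos.ne' (fun {d} hd hdd =>
      le_antisymm (hqmax' d hd (hdd.trans hKd)) (hK1 d hd hdd)))
  obtain ⟨S⟩ : Nonempty (Sylow q G) := inferInstance
  have hSN : ((S : Subgroup G) ⊔ N).Normal := by
    have e : (S : Subgroup G).map (QuotientGroup.mk' N) = K' := by
      apply le_antisymm
      · apply le_of_coprime hK'
        obtain ⟨a, ha⟩ := IsPGroup.iff_card.1 (S.2.map (QuotientGroup.mk' N))
        rw [ha]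
        apply Nat.Coprime.pow_left
        rw [hqp.coprime_iff_not_dvd]
        intro h
        exact lt_irrefl _ (hK2 q hqp h)
      · have := hKq.le_sylow_of_normal (S.mapSurjective (QuotientGroup.mk'_surjective N))
        exact this
    have := hK'.comap (QuotientGroup.mk' N)
    rw [← e, QuotientGroup.comap_map_mk', sup_comm] at this
    exact this
  have hSn := frat_sylow hf S hSN
  have hqS : q ∣ Nat.card S := S.dvd_card_of_dvd_card hqd
  have hNS := h1 S hSn (ne_bot_of_prime_dvd hqp hqS)
  obtain ⟨x0, hx0N, hx0⟩ : ∃ x ∈ N, x ≠ 1 := by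
    by_contra! h
    exact hne ((Subgroup.eq_bot_iff_forall N).2 h)
  have hpq : q = p := by
    obtain ⟨a, ha⟩ := S.2 ⟨x0, hNS hx0N⟩
    have ha' : x0 ^ q ^ a = 1 := congrArg Subtype.val ha
    have := Fact.mk hp
    have ho := orderOf_eq_prime (hexp x0 hx0N) hx0
    have := orderOf_dvd_of_pow_eq_one ha'
    rw [ho] at this
    exact ((Nat.prime_dvd_prime_iff_eq hp hqp).1 (hp.dvd_of_dvd_pow this)).symm
  subst hpq
  obtain ⟨P, hPS⟩ : ∃ P : Subgroup G, P = S := ⟨_, rfl⟩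
  have hPi : ¬ q ∣ P.index := by rw [hPS]; exact S.not_dvd_index
  have hPp : IsPGroup q P := by rw [hPS]; exact S.2
  rw [← hPS] at hSn hNS
  have hP0 : P ≠ ⊥ := by rw [hPS]; exact ne_bot_of_prime_dvd hqp hqS
  have hcP : ∀ x ∈ N, ∀ y ∈ P, x * y = y * x := by
    have hnt : Nontrivial P := (Subgroup.nontrivial_iff_ne_bot P).2 hP0
    have hle := h1 ((Subgroup.center P).map P.subtype) inferInstance (by
      rw [Ne, Subgroup.map_eq_bot_iff_of_injective _ P.subtype_injective]
      exact hPp.bot_lt_center.ne')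
    intro x hx y hy
    obtain ⟨z, hz, rfl⟩ := hle hx
    have := Subgroup.mem_center_iff.1 hz ⟨y, hy⟩
    exact (congrArg Subtype.val this).symm
  obtain ⟨a, ha⟩ := IsPGroup.iff_card.1 hPp
  obtain ⟨K, hK⟩ := Subgroup.exists_right_complement'_of_coprime (N := P) (by
    rw [ha]; exact Nat.Coprime.pow_left _ ((hqp.coprime_iff_not_dvd).2 hPi))
  have hKc : (Nat.card K).Coprime q := by
    rw [← hK.symm.index_eq_card]; exact ((hqp.coprime_iff_not_dvd).2 hPi).symm
  have hPK : ∀ g : G, ∃ x ∈ P, ∃ k ∈ K, x * k = g := by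
    intro g
    have : g ∈ P ⊔ K := by rw [hK.sup_eq_top]; trivial
    exact Subgroup.mem_sup_of_normal_left.1 this
  have hPD : P ≤ Dp q G := by
    intro x hx
    obtain ⟨b, hb⟩ := hPp ⟨x, hx⟩
    exact Dp_pelt hqp x b (congrArg Subtype.val hb)
  have hDn := Dp_normal q G
  have hLc : (Nat.card (K ⊓ Dp q G : Subgroup G)).Coprime q :=
    Nat.Coprime.of_dvd_left (Subgroup.card_dvd_of_le inf_le_left) hKc
  have hc1 : ∀ x ∈ P, ∀ k ∈ K ⊓ Dp q G, k * x * k⁻¹ * x⁻¹ ∈ N := by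
    intro x hx k hk
    have := dp_coprime hqp hGN (hSn.map _ (QuotientGroup.mk'_surjective N))
      (hPp.map (QuotientGroup.mk' N)) (Dp_map (QuotientGroup.mk' N) hk.2)
      (Nat.Coprime.of_dvd_left ((orderOf_map_dvd _ k).trans (Subgroup.orderOf_dvd_natCard K hk.1)) hKc)
      (x := QuotientGroup.mk' N x) ⟨x, hx, rfl⟩
    apply (QuotientGroup.eq_one_iff (N := N) _).1
    change QuotientGroup.mk' N _ = 1
    simp only [map_mul, map_inv]
    rw [this]; group
  obtain ⟨C, hC⟩ : ∃ C, C = P ⊓ Subgroup.centralizer ((K ⊓ Dp q G : Subgroup G) : Set G) := ⟨_, rfl⟩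
  have hmemC : ∀ x, x ∈ C ↔ x ∈ P ∧ ∀ k ∈ K ⊓ Dp q G, k * x = x * k := by
    intro x
    rw [hC, Subgroup.mem_inf, Subgroup.mem_centralizer_iff]
    rfl
  have hPCN : ∀ x ∈ P, ∃ n ∈ N, n * x ∈ C := by
    intro x hx
    obtain ⟨n, hn, h⟩ := avg hqp hR hcomm hexp _ hLc x (hc1 x hx)
    exact ⟨n, hn, (hmemC _).2 ⟨mul_mem (hNS hn) hx, h⟩⟩
  have hCn : C.Normal := by
    constructor
    intro y hy g
    obtain ⟨x, hx, k, hk, rfl⟩ := hPK g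
    have hy1 : k * y * k⁻¹ ∈ C := by
      rw [hmemC] at hy ⊢
      refine ⟨hSn.conj_mem y hy.1 k, fun l hl => ?_⟩
      have hl' : k⁻¹ * l * k ∈ K ⊓ Dp q G := by
        refine ⟨K.mul_mem (K.mul_mem (K.inv_mem hk) hl.1) hk, ?_⟩
        have := hDn.conj_mem l hl.2 k⁻¹
        rwa [inv_inv] at this
      have := hy.2 _ hl'
      calc l * (k * y * k⁻¹) = k * ((k⁻¹ * l * k) * y) * k⁻¹ := by group
        _ = _ := by rw [this]; group
    obtain ⟨n, hn, hnx⟩ := hPCN x hx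
    have h2 := mul_mem (mul_mem hnx hy1) (inv_mem hnx)
    have h3 : x * k * y * (x * k)⁻¹ = n⁻¹ * (n * x * (k * y * k⁻¹) * (n * x)⁻¹) * n := by group
    have h4 := hcP n hn _ ((hmemC _).1 h2).1
    rw [h3, mul_assoc, ← h4]
    simpa using h2
  have hNC : N ≤ C := by
    apply h1 C hCn
    intro hC0
    have hPN : P ≤ N := by
      intro x hx
      obtain ⟨n, hn, hnx⟩ := hPCN x hx
      rw [hC0, Subgroup.mem_bot] at hnx
      rw [eq_inv_of_mul_eq_one_right hnx]
      exact inv_mem hn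
    have hKt : K = ⊤ := by
      apply frattini_nongenerating
      rw [eq_top_iff, ← hK.sup_eq_top, sup_comm]
      exact sup_le_sup_left (hPN.trans hf) _
    apply hP0
    have := hK.disjoint.eq_bot
    rwa [hKt, inf_top_eq] at this
  have hcardN : Nat.card N = q := by
    apply card_of_Dp_cent hqp hmin hcomm hexp
    intro d hd x hx
    obtain ⟨y, hy, k, hk, rfl⟩ := hPK d
    have hkD : k ∈ Dp q G := by
      have := mul_mem (inv_mem (hPD hy)) hd
      simpa using this
    have e1 := ((hmemC x).1 (hNC hx)).2 k ⟨hk, hkD⟩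
    have e2 := hcP x hx y hy
    rw [mul_assoc, e1, ← mul_assoc, ← e2, mul_assoc]
  apply hne
  rw [hNR, ← ss_iff_res, ss_iff]
  exact ss_of_step (prime_step hR (hcardN ▸ hqp)) ((ssr_iff hR).2 hNR.ge)

theorem thA {G : Type*} [Group G] [Finite G] (h : ssResidual G ≤ frattini G) :
    ssResidual G = ⊥ := thA_aux _ G rfl h


open scoped commutatorElement

theorem mem_smul_sylow {G : Type*} [Group G] {p : ℕ} (P : Sylow p G) (g y : G) :
    y ∈ ((g • P : Sylow p G) : Subgroup G) ↔ g⁻¹ * y * g ∈ (P : Subgroup G) := by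
  rw [Sylow.coe_subgroup_smul, Subgroup.mem_pointwise_smul_iff_inv_smul_mem]
  simp [← map_inv]

theorem normalizer_grows {G : Type*} [Group G] [Finite G] {p : ℕ} [Fact p.Prime]
    {D P : Subgroup G} (hP : IsPGroup p P) (h : D < P) :
    D < P ⊓ Subgroup.normalizer (D : Set G) := by
  have hle : D ≤ P ⊓ Subgroup.normalizer (D : Set G) := le_inf h.le Subgroup.le_normalizer
  refine lt_of_le_of_ne hle ?_
  have := hP.isNilpotent
  have h1 := Group.normalizerCondition_of_isNilpotent (G := P) (D.subgroupOf P) (by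
    rw [lt_top_iff_ne_top, Ne, Subgroup.subgroupOf_eq_top]
    exact fun h' => (h.trans_le h').false)
  obtain ⟨x, hx, hxD⟩ := SetLike.exists_of_lt h1
  intro heq
  apply hxD
  rw [Subgroup.mem_subgroupOf, heq]
  refine ⟨x.2, ?_⟩
  change (x : G) ∈ Subgroup.normalizer (D : Set G)
  rw [Subgroup.mem_normalizer_iff] at hx ⊢
  intro y
  constructor
  · intro hy
    exact (hx ⟨y, h.le hy⟩).1 hy
  · intro hy
    have hyP : y ∈ P := by
      have := mul_mem (mul_mem (inv_mem x.2) (h.le hy)) x.2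
      simpa [mul_assoc] using this
    exact (hx ⟨y, hyP⟩).2 hy

/-- factorization hypothesis for normalizers of p-subgroups -/
def NFac (p : ℕ) (G : Type*) [Group G] : Prop :=
  ∀ D : Subgroup G, D ≠ ⊥ → IsPGroup p D → ∀ S : Sylow p (Subgroup.normalizer (D : Set G)),
    ∀ n : Subgroup.normalizer (D : Set G), ∃ s ∈ S, ∃ l : Subgroup.normalizer (D : Set G),
      (∀ d ∈ D, (l : G) * d = d * l) ∧ n = s * l

theorem nfac_conj {G : Type*} [Group G] [Finite G] {p : ℕ} [Fact p.Prime] (H : NFac p G)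
    {D : Subgroup G} (hD : D ≠ ⊥) (hDp : IsPGroup p D) {A B : Subgroup G} (hA : IsPGroup p A)
    (hB : IsPGroup p B) (hA' : A ≤ Subgroup.normalizer (D : Set G))
    (hB' : B ≤ Subgroup.normalizer (D : Set G)) :
    ∃ l : G, (∀ d ∈ D, l * d = d * l) ∧ ∃ T : Sylow p G, (∀ a ∈ A, l * a * l⁻¹ ∈ (T : Subgroup G)) ∧
      B ≤ T := by
  obtain ⟨S1, h1⟩ := (hA.comap_subtype (K := Subgroup.normalizer (D : Set G))).exists_le_sylow
  obtain ⟨S2, h2⟩ := (hB.comap_subtype (K := Subgroup.normalizer (D : Set G))).exists_le_sylow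
  obtain ⟨n, hn⟩ := MulAction.exists_smul_eq (Subgroup.normalizer (D : Set G)) S1 S2
  obtain ⟨s, hs, l, hl, rfl⟩ := H D hD hDp S2 n
  obtain ⟨T, hT⟩ := (S2.2.map (Subgroup.subtype _)).exists_le_sylow
  refine ⟨l, hl, T, ?_, ?_⟩
  · intro a ha
    apply hT
    refine ⟨l * ⟨a, hA' ha⟩ * l⁻¹, ?_, rfl⟩
    have h3 : (⟨a, hA' ha⟩ : Subgroup.normalizer (D : Set G)) ∈ (S1 : Subgroup _) := h1 ha
    have h4 : s * l * ⟨a, hA' ha⟩ * (s * l)⁻¹ ∈ (S2 : Subgroup _) := by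
      rw [← hn, mem_smul_sylow]
      have : (s * l)⁻¹ * (s * l * ⟨a, hA' ha⟩ * (s * l)⁻¹) * (s * l) = ⟨a, hA' ha⟩ := by group
      rw [this]; exact h3
    have h5 := mul_mem (mul_mem (inv_mem hs) h4) hs
    have h6 : s⁻¹ * (s * l * ⟨a, hA' ha⟩ * (s * l)⁻¹) * s = l * ⟨a, hA' ha⟩ * l⁻¹ := by group
    rw [h6] at h5
    exact h5
  · intro b hb
    exact hT ⟨⟨b, hB' hb⟩, h2 hb, rfl⟩

theorem card_lt_of_lt' {G : Type*} [Group G] [Finite G] {A B : Subgroup G} (h : A < B) :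
    Nat.card A < Nat.card B := by
  refine lt_of_le_of_ne (Subgroup.card_le_of_le h.le) (fun he => ?_)
  exact h.ne (Subgroup.eq_of_le_of_card_ge h.le he.ge)

theorem nfac_sylow {G : Type*} [Group G] [Finite G] {p : ℕ} [Fact p.Prime] (H : NFac p G) (n : ℕ) :
    ∀ P Q : Sylow p G, Nat.card G - Nat.card ((P : Subgroup G) ⊓ Q : Subgroup G) = n →
    ∃ c : G, (∀ d ∈ (P : Subgroup G) ⊓ Q, c * d = d * c) ∧ c • P = Q := by
  induction n using Nat.strong_induction_on with
  | _ n ih =>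
  intro P Q hn
  by_cases hPQ : P = Q
  · exact ⟨1, by simp, by simp [hPQ]⟩
  obtain ⟨D, hD⟩ : ∃ D, D = (P : Subgroup G) ⊓ Q := ⟨_, rfl⟩
  rw [← hD] at hn ⊢
  by_cases hD0 : D = ⊥
  · obtain ⟨c, hc⟩ := MulAction.exists_smul_eq G P Q
    refine ⟨c, ?_, hc⟩
    intro d hd
    rw [hD0, Subgroup.mem_bot] at hd
    rw [hd]; simp
  have hDP : D < P := by
    refine lt_of_le_of_ne (hD ▸ inf_le_left) (fun h => hPQ ?_)
    have : (P : Subgroup G) ≤ Q := by rw [← h, hD]; exact inf_le_right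
    exact (Sylow.ext (P.3 Q.2 this)).symm
  have hDQ : D < Q := by
    refine lt_of_le_of_ne (hD ▸ inf_le_right) (fun h => hPQ ?_)
    have : (Q : Subgroup G) ≤ P := by rw [← h, hD]; exact inf_le_left
    exact Sylow.ext (Q.3 P.2 this)
  have hDp : IsPGroup p D := P.2.to_le hDP.le
  have hA := normalizer_grows P.2 hDP
  have hB := normalizer_grows Q.2 hDQ
  obtain ⟨l, hl, T, hT1, hT2⟩ := nfac_conj H hD0 hDp (P.2.to_le inf_le_left) (Q.2.to_le inf_le_left)
    (inf_le_right : (P : Subgroup G) ⊓ Subgroup.normalizer (D : Set G) ≤ _)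
    (inf_le_right : (Q : Subgroup G) ⊓ Subgroup.normalizer (D : Set G) ≤ _)
  obtain ⟨A, hAd⟩ : ∃ A, A = (P : Subgroup G) ⊓ Subgroup.normalizer (D : Set G) := ⟨_, rfl⟩
  rw [← hAd] at hA hT1
  have hle1 : A.map (MulAut.conj l).toMonoidHom ≤ ((l • P : Sylow p G) : Subgroup G) ⊓ T := by
    rintro _ ⟨a, ha, rfl⟩
    refine ⟨?_, hT1 a ha⟩
    change _ ∈ ((l • P : Sylow p G) : Subgroup G)
    rw [mem_smul_sylow]
    have hap : a ∈ (P : Subgroup G) := by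
      have ha' : a ∈ A := ha
      rw [hAd] at ha'; exact ha'.1
    simpa [mul_assoc] using hap
  have hle2 : (Q : Subgroup G) ⊓ Subgroup.normalizer (D : Set G) ≤ (T : Subgroup G) ⊓ Q :=
    le_inf hT2 inf_le_left
  have hc1 : Nat.card D < Nat.card (((l • P : Sylow p G) : Subgroup G) ⊓ T : Subgroup G) := by
    refine (card_lt_of_lt' hA).trans_le ?_
    rw [← Subgroup.card_map_of_injective (f := (MulAut.conj l).toMonoidHom) (MulAut.conj l).injective]
    exact Subgroup.card_le_of_le hle1
  have hc2 : Nat.card D < Nat.card ((T : Subgroup G) ⊓ Q : Subgroup G) :=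
    (card_lt_of_lt' hB).trans_le (Subgroup.card_le_of_le hle2)
  have hb1 : Nat.card (((l • P : Sylow p G) : Subgroup G) ⊓ T : Subgroup G) ≤ Nat.card G :=
    Subgroup.card_le_card_group _
  have hb2 : Nat.card ((T : Subgroup G) ⊓ Q : Subgroup G) ≤ Nat.card G :=
    Subgroup.card_le_card_group _
  obtain ⟨c1, hc1', hc1s⟩ := ih _ (by omega) (l • P) T rfl
  obtain ⟨c2, hc2', hc2s⟩ := ih _ (by omega) T Q rfl
  refine ⟨c2 * c1 * l, ?_, ?_⟩
  · intro d hd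
    have e1 := hl d hd
    have e2 := hc2' d (hle2 (hB.le hd))
    have e3 := hc1' d (hle1 ⟨d, hA.le hd, by
      simp only [MulEquiv.toMonoidHom_eq_coe, MonoidHom.coe_coe, MulAut.conj_apply]
      rw [e1]; group⟩)
    rw [mul_assoc, e1, ← mul_assoc, mul_assoc c2, e3, ← mul_assoc, e2]
    group
  · rw [mul_smul, mul_smul, hc1s, hc2s]

theorem nfac_focal {G : Type*} [Group G] [Finite G] {p : ℕ} [Fact p.Prime] (H : NFac p G)
    (P : Sylow p G) (hP : (P : Subgroup G) ≠ ⊥) :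
    Subgroup.focalSubgroup (P : Subgroup G) ≤ ⁅(P : Subgroup G), (P : Subgroup G)⁆ := by
  rw [Subgroup.focalSubgroup_def, Subgroup.closure_le]
  rintro g ⟨hg, x, hx, u, rfl⟩
  obtain ⟨c, hc, hcs⟩ := nfac_sylow H _ (u • P) P rfl
  have hy : u * x⁻¹ * u⁻¹ ∈ (P : Subgroup G) := by
    have := mul_mem (inv_mem hx) hg
    rw [commutatorElement_def] at this
    simpa [mul_assoc] using this
  have hcu : c * u ∈ Subgroup.normalizer ((P : Subgroup G) : Set G) := by
    apply Sylow.smul_eq_iff_mem_normalizer.1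
    rw [mul_smul, hcs]
  have hcy := hc (u * x⁻¹ * u⁻¹) ⟨by
    change _ ∈ ((u • P : Sylow p G) : Subgroup G)
    rw [mem_smul_sylow]
    simpa [mul_assoc] using hx, hy⟩
  obtain ⟨s, hs, l, hl, hsl⟩ := H P hP P.2 (P.subtype Subgroup.le_normalizer) ⟨c * u, hcu⟩
  have hs' : (s : G) ∈ (P : Subgroup G) := hs
  have hsl' : c * u = s * l := congrArg Subtype.val hsl
  have hlx := hl x⁻¹ (inv_mem hx)
  have e : u * x⁻¹ * u⁻¹ = s * x⁻¹ * (s : G)⁻¹ := by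
    calc u * x⁻¹ * u⁻¹ = c * (u * x⁻¹ * u⁻¹) * c⁻¹ := by rw [hcy]; group
      _ = (c * u) * x⁻¹ * (c * u)⁻¹ := by group
      _ = s * (l * x⁻¹) * (l : G)⁻¹ * (s : G)⁻¹ := by rw [hsl']; group
      _ = _ := by rw [hlx]; group
  have e2 : ⁅x, u⁆ = ⁅x, (s : G)⁆ := by
    rw [commutatorElement_def, commutatorElement_def]
    calc x * u * x⁻¹ * u⁻¹ = x * (u * x⁻¹ * u⁻¹) := by group
      _ = _ := by rw [e]; group
  rw [e2]
  exact Subgroup.commutator_mem_commutator hx hs'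

theorem nfac_of_ss {G : Type*} [Group G] [Finite G] {p : ℕ} [Fact p.Prime]
    (hmin : ∀ q, q.Prime → q ∣ Nat.card G → p ≤ q)
    (h : ∀ D : Subgroup G, D ≠ ⊥ → IsPGroup p D →
      IsSupersoluble (Subgroup.normalizer (D : Set G))) : NFac p G := by
  have hp : p.Prime := Fact.out
  intro D hD hDp S n
  obtain ⟨L, hLn, hL1, hL2⟩ := tower (h D hD hDp) (p + 1)
  have hLcop : p.Coprime (Nat.card L) := by
    rw [hp.coprime_iff_not_dvd]
    intro hd; have := hL1 p hp hd; omega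
  have hLi : L.index = p ^ L.index.primeFactorsList.length := by
    apply Nat.eq_prime_pow_of_unique_prime_dvd Subgroup.index_ne_zero_of_finite
    intro d hd hdd
    have h1 := hL2 d hd hdd
    have h2 := hmin d hd (hdd.trans (L.index_dvd_card.trans (Subgroup.card_subgroup_dvd_card _)))
    omega
  have hsup : (S : Subgroup _) ⊔ L = ⊤ := by
    rw [← Subgroup.index_eq_one]
    have d1 := Subgroup.index_dvd_of_le (le_sup_left (a := (S : Subgroup (Subgroup.normalizer (D : Set G)))) (b := L))
    have d2 := Subgroup.index_dvd_of_le (le_sup_right : L ≤ (S : Subgroup _) ⊔ L)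
    have hc : (S : Subgroup (Subgroup.normalizer (D : Set G))).index.Coprime L.index := by
      rw [hLi]
      exact (Nat.Coprime.pow_left _ ((hp.coprime_iff_not_dvd).2 S.not_dvd_index)).symm
    have := Nat.dvd_gcd d1 d2
    rw [hc] at this
    exact Nat.dvd_one.1 this
  have hn : n ∈ (S : Subgroup _) ⊔ L := by rw [hsup]; trivial
  obtain ⟨s, hs, l, hl, rfl⟩ := Subgroup.mem_sup_of_normal_right.1 hn
  refine ⟨s, hs, l, ?_, rfl⟩
  intro d hd
  have hdN : d ∈ Subgroup.normalizer (D : Set G) := Subgroup.le_normalizer hd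
  have hz1 : l * (⟨d, hdN⟩ * l⁻¹ * ⟨d, hdN⟩⁻¹) ∈ L := mul_mem hl (hLn.conj_mem _ (inv_mem hl) _)
  have hz2 : (l : G) * d * (l : G)⁻¹ * d⁻¹ ∈ D :=
    mul_mem ((Subgroup.mem_normalizer_iff.1 l.2 d).1 hd) (inv_mem hd)
  obtain ⟨a, ha⟩ := hDp ⟨_, hz2⟩
  have ha' : ((l : G) * d * (l : G)⁻¹ * d⁻¹) ^ p ^ a = 1 := congrArg Subtype.val ha
  have hb : ((l : G) * d * (l : G)⁻¹ * d⁻¹) ^ Nat.card L = 1 := by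
    have := pow_card_eq_one' (x := (⟨_, hz1⟩ : L))
    have := congrArg (fun z : L => ((z : Subgroup.normalizer (D : Set G)) : G)) this
    have e : (l : G) * d * (l : G)⁻¹ * d⁻¹ =
        ((l * (⟨d, hdN⟩ * l⁻¹ * ⟨d, hdN⟩⁻¹) : Subgroup.normalizer (D : Set G)) : G) := by
      simp [mul_assoc]
    rw [e]
    exact this
  have h3 : (l : G) * d * (l : G)⁻¹ * d⁻¹ = 1 := by
    have := Nat.dvd_gcd (orderOf_dvd_of_pow_eq_one ha') (orderOf_dvd_of_pow_eq_one hb)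
    rw [hLcop.pow_left a] at this
    exact orderOf_eq_one_iff.1 (Nat.dvd_one.1 this)
  rw [mul_inv_eq_one, mul_inv_eq_iff_eq_mul] at h3
  exact h3

theorem thB {G : Type*} [Group G] [Finite G] [IsSimpleGroup G]
    (h : ∀ H : Subgroup G, H ≠ ⊤ → IsSupersoluble H) : ∀ a b : G, a * b = b * a := by
  by_contra hcon
  have hcard : Nat.card G ≠ 1 := (Finite.one_lt_card (α := G)).ne'
  obtain ⟨p, hpd⟩ : ∃ p, p = (Nat.card G).minFac := ⟨_, rfl⟩
  have hp : p.Prime := hpd ▸ Nat.minFac_prime hcard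
  have := Fact.mk hp
  have hctop : Subgroup.center G ≠ ⊤ := by
    intro hc
    apply hcon
    intro a b
    have : b ∈ Subgroup.center G := hc ▸ Subgroup.mem_top b
    exact Subgroup.mem_center_iff.1 this a
  have hc0 : Subgroup.center G = ⊥ :=
    (Subgroup.Normal.eq_bot_or_eq_top inferInstance).resolve_right hctop
  have hfac : NFac p G := by
    apply nfac_of_ss
    · intro q hq hqd; rw [hpd]; exact Nat.minFac_le_of_dvd hq.two_le hqd
    · intro D hD hDp
      apply h
      intro htop
      have hDn : D.Normal := Subgroup.normalizer_eq_top_iff.1 htop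
      have hDt := hDn.eq_bot_or_eq_top.resolve_left hD
      have hGp : IsPGroup p G := by
        intro g
        obtain ⟨a, ha⟩ := hDp ⟨g, hDt ▸ Subgroup.mem_top g⟩
        exact ⟨a, congrArg Subtype.val ha⟩
      exact hGp.bot_lt_center.ne' hc0
  obtain ⟨P⟩ : Nonempty (Sylow p G) := inferInstance
  have hP0 : (P : Subgroup G) ≠ ⊥ :=
    ne_bot_of_prime_dvd hp (P.dvd_card_of_dvd_card (hpd ▸ Nat.minFac_dvd _))
  have hcomm : _root_.commutator G = ⊤ := by
    refine (Subgroup.Normal.eq_bot_or_eq_top inferInstance).resolve_left (fun hb => hcon ?_)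
    intro a b
    have : ⁅a, b⁆ ∈ _root_.commutator G :=
      Subgroup.commutator_mem_commutator (Subgroup.mem_top a) (Subgroup.mem_top b)
    rw [hb, Subgroup.mem_bot] at this
    exact commutatorElement_eq_one_iff_mul_comm.1 this
  have h1 := nfac_focal hfac P hP0
  have h2 := Subgroup.commutator_inf_eq_focalSubgroup P
  rw [hcomm, top_inf_eq] at h2
  rw [← h2] at h1
  have hnil := P.2.isNilpotent
  have hnt : Nontrivial P := (Subgroup.nontrivial_iff_ne_bot (P : Subgroup G)).2 hP0
  have hlt := Group.IsSolvable.commutator_lt_top_of_nontrivial (P : Subgroup G)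
  apply hlt.ne
  apply Subgroup.map_injective (P : Subgroup G).subtype_injective
  rw [Subgroup.map_subtype_commutator, ← MonoidHom.range_eq_map, Subgroup.range_subtype]
  exact le_antisymm (Subgroup.commutator_le_self _) h1

theorem res_ne_top {G : Type*} [Group G] [Finite G] (hG : IsMinimalNonsupersoluble G) :
    ssResidual G ≠ ⊤ := by
  intro hR
  have hnt : (⊥ : Subgroup G) ≠ ⊤ := by
    intro hb
    apply hG.1
    rw [ss_iff_res, hR, hb]
  have hfin : {M : Subgroup G | M.Normal ∧ M ≠ ⊤}.Finite := Set.toFinite _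
  obtain ⟨N, hN⟩ := hfin.exists_maximal ⟨⊥, inferInstance, hnt⟩
  have hNn := hN.prop.1
  have hsimp : IsSimpleGroup (G ⧸ N) := by
    have : Nontrivial (G ⧸ N) := QuotientGroup.nontrivial_iff.2 hN.prop.2
    refine ⟨fun H hH => ?_⟩
    by_cases ht : H.comap (QuotientGroup.mk' N) = ⊤
    · right
      rw [← Subgroup.map_comap_eq_self_of_surjective (QuotientGroup.mk'_surjective N) H, ht,
        Subgroup.map_top_of_surjective _ (QuotientGroup.mk'_surjective N)]
    · left
      have hle : N ≤ H.comap (QuotientGroup.mk' N) := QuotientGroup.le_comap_mk' N H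
      have := hN.eq_of_le ⟨hH.comap _, ht⟩ hle
      rw [← Subgroup.map_comap_eq_self_of_surjective (QuotientGroup.mk'_surjective N) H, ← this,
        QuotientGroup.map_mk'_self]
  have hcom := thB (G := G ⧸ N) (by
    intro H hH
    have h1 : IsSupersoluble (H.comap (QuotientGroup.mk' N)) := by
      apply hG.2
      intro ht
      apply hH
      rw [← Subgroup.map_comap_eq_self_of_surjective (QuotientGroup.mk'_surjective N) H, ht,
        Subgroup.map_top_of_surjective _ (QuotientGroup.mk'_surjective N)]
    exact ss_of_surj ((QuotientGroup.mk' N).subgroupComap H)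
      (MonoidHom.subgroupComap_surjective_of_surjective _ _ (QuotientGroup.mk'_surjective N)) h1)
  have hcoat : IsCoatom (⊥ : Subgroup (G ⧸ N)) := by
    refine ⟨bot_ne_top, fun H hH => ?_⟩
    have : H.Normal := ⟨fun x hx g => by rw [hcom g x]; simpa using hx⟩
    exact this.eq_bot_or_eq_top.resolve_left hH.ne'
  have h1 := coatom_normal_res hcoat inferInstance
  rw [res_map _ (QuotientGroup.mk'_surjective N), le_bot_iff, Subgroup.map_eq_bot_iff,
    QuotientGroup.ker_mk', hR, top_le_iff] at h1
  exact hN.prop.2 h1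


theorem modl {G : Type*} [Group G] {H M V : Subgroup G} (hV : V.Normal) (hHM : H ≤ M)
    (hi : M ⊓ V ≤ H) (h : M ≤ H ⊔ V) : M ≤ H := by
  intro m hm
  obtain ⟨a, ha, v, hv, rfl⟩ := Subgroup.mem_sup_of_normal_right.1 (h hm)
  refine mul_mem ha (hi ⟨?_, hv⟩)
  have := M.mul_mem (M.inv_mem (hHM ha)) hm
  simpa using this

theorem lemF {X : Type*} [Group X] [Finite X] {Y : Subgroup X} (hY : Y.Normal)
    (hF : Y ≤ frattini X) {p : ℕ} (hp : p.Prime) (hi : ¬ p ∣ Y.index) : ¬ p ∣ Nat.card Y := by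
  have := Fact.mk hp
  intro hd
  obtain ⟨S⟩ : Nonempty (Sylow p X) := inferInstance
  have hSY : (S : Subgroup X) ≤ Y := by
    apply le_of_coprime hY
    obtain ⟨k, hk⟩ := IsPGroup.iff_card.1 S.2
    rw [hk]
    exact Nat.Coprime.pow_left _ ((hp.coprime_iff_not_dvd).2 hi)
  have hSn : (S : Subgroup X).Normal := frat_sylow hF S (by rw [sup_eq_right.2 hSY]; exact hY)
  have hcop : (Nat.card (S : Subgroup X)).Coprime (S : Subgroup X).index := by
    obtain ⟨k, hk⟩ := IsPGroup.iff_card.1 S.2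
    rw [hk]
    exact Nat.Coprime.pow_left _ ((hp.coprime_iff_not_dvd).2 S.not_dvd_index)
  obtain ⟨B, hB⟩ := Subgroup.exists_right_complement'_of_coprime hcop
  have hBt : B = ⊤ := by
    apply frattini_nongenerating
    rw [eq_top_iff, ← hB.sup_eq_top, sup_comm]
    exact sup_le_sup_left (hSY.trans hF) _
  have hSb : (S : Subgroup X) = ⊥ := by
    have := hB.disjoint.eq_bot
    rwa [hBt, inf_top_eq] at this
  have : p ∣ Nat.card (S : Subgroup X) :=
    S.dvd_card_of_dvd_card (hd.trans (Subgroup.card_subgroup_dvd_card Y))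
  exact ne_bot_of_prime_dvd hp this hSb

theorem comm_tower {K : Type*} [Group K] [Finite K] (hK : IsSupersoluble K) {V : Subgroup K}
    (hV : V.Normal) {p : ℕ} (hp : p.Prime) (hexp : ∀ x ∈ V, x ^ p = 1) {x : K}
    (hx : ∀ q, q.Prime → q ∣ orderOf x → p + 1 ≤ q) {v : K} (hv : v ∈ V) : x * v = v * x := by
  obtain ⟨L, hL, hL1, hL2⟩ := tower hK (p + 1)
  have hxL : x ∈ L := by
    apply mem_of_coprime hL
    apply Nat.coprime_of_dvd
    intro q hq h1 h2
    have := hx q hq h1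
    have := hL2 q hq h2
    omega
  have hz1 : x * v * x⁻¹ * v⁻¹ ∈ V := mul_mem (hV.conj_mem _ hv _) (inv_mem hv)
  have hz2 : x * v * x⁻¹ * v⁻¹ ∈ L := by
    have := mul_mem hxL (hL.conj_mem _ (inv_mem hxL) v)
    simpa [mul_assoc] using this
  have h1 := orderOf_dvd_of_pow_eq_one (hexp _ hz1)
  have h2 := Subgroup.orderOf_dvd_natCard L hz2
  have h3 : p.Coprime (Nat.card L) := by
    rw [hp.coprime_iff_not_dvd]
    intro hd; have := hL1 p hp hd; omega
  have h4 := Nat.dvd_gcd h1 h2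
  rw [h3] at h4
  have h5 := orderOf_eq_one_iff.1 (Nat.dvd_one.1 h4)
  rw [mul_inv_eq_one, mul_inv_eq_iff_eq_mul] at h5
  exact h5

theorem norm_of_sup {G : Type*} [Group G] {M V F : Subgroup G} (h : M ⊔ V = ⊤)
    (h1 : ∀ m ∈ M, ∀ f ∈ F, m * f * m⁻¹ ∈ F) (h2 : ∀ m ∈ V, ∀ f ∈ F, m * f * m⁻¹ ∈ F) :
    F.Normal := by
  rw [← Subgroup.normalizer_eq_top_iff, eq_top_iff, ← h]
  have key : ∀ A : Subgroup G, (∀ m ∈ A, ∀ f ∈ F, m * f * m⁻¹ ∈ F) →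
      A ≤ Subgroup.normalizer (F : Set G) := by
    intro A hA m hm
    rw [Subgroup.mem_normalizer_iff]
    intro f
    refine ⟨hA m hm f, fun hf => ?_⟩
    have := hA _ (inv_mem hm) _ hf
    simpa [mul_assoc] using this
  exact sup_le (key M h1) (key V h2)

theorem lemC {G : Type*} [Group G] [Finite G] (hG : IsMinimalNonsupersoluble G) {V M : Subgroup G}
    (hV : IsMinimalNormal V) (hcomm : ∀ x ∈ V, ∀ y ∈ V, x * y = y * x) {p : ℕ} (hp : p.Prime)
    (hexp : ∀ x ∈ V, x ^ p = 1) (hR : ssResidual G ≤ V) (hMV : M ⊔ V = ⊤) (hMi : M ⊓ V = ⊥) :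
    ¬ p ∣ Nat.card M := by
  intro hpM
  have hpf := Fact.mk hp
  have hVn := hV.1
  have hMt : M ≠ ⊤ := by
    rintro rfl
    rw [top_inf_eq] at hMi
    exact hV.2.1 hMi
  have hMs := hG.2 M hMt
  have hprop : ∀ H : Subgroup M, H ≠ ⊤ → IsSupersoluble (H.map M.subtype ⊔ V : Subgroup G) := by
    intro H hH
    apply hG.2
    intro ht
    apply hH
    have := modl hVn (Subgroup.map_subtype_le H) (by rw [hMi]; exact bot_le)
      (by rw [ht]; exact le_top : M ≤ H.map M.subtype ⊔ V)
    rw [eq_top_iff]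
    intro x _
    obtain ⟨y, hy, hyx⟩ := this x.2
    rwa [← Subtype.ext (show (y : G) = x from hyx)]
  let φ : M →* MulAut V := MulAut.conjNormal.comp M.subtype
  have hφ : ∀ (m : M) (v : V), ((φ m v : V) : G) = m * v * (m : G)⁻¹ := fun m v => by
    simp [φ]
  have hker : ∀ m : M, m ∈ φ.ker ↔ ∀ v ∈ V, (m : G) * v = v * m := by
    intro m
    rw [MonoidHom.mem_ker]
    constructor
    · intro h v hv
      have h1 := hφ m ⟨v, hv⟩
      rw [h] at h1
      have h2 : v = m * v * (m : G)⁻¹ := h1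
      exact (eq_mul_inv_iff_mul_eq.1 h2).symm
    · intro h
      ext v
      rw [hφ, h v v.2]
      simp
  -- first step
  obtain ⟨Q, hQn, hQ1, hQ2⟩ := tower hMs (p + 1)
  have hQt : Q ≠ ⊤ := by
    rintro rfl
    rw [Subgroup.card_top] at hQ1
    have := hQ1 p hp hpM
    omega
  have hQker : Q ≤ φ.ker := by
    intro x hx
    rw [hker]
    intro v hv
    have hVK : V ≤ Q.map M.subtype ⊔ V := le_sup_right
    have hxK : (x : G) ∈ Q.map M.subtype ⊔ V :=
      (le_sup_left : _ ≤ Q.map M.subtype ⊔ V) ⟨x, hx, rfl⟩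
    have h1 := comm_tower (hprop Q hQt) (hVn.subgroupOf _) hp
      (by
        rintro ⟨y, hy⟩ hyV
        exact Subtype.ext (hexp y hyV)) (x := ⟨x, hxK⟩)
      (by
        intro q hq hqd
        apply hQ1 q hq
        refine hqd.trans ?_
        rw [Subgroup.orderOf_mk, Subgroup.orderOf_coe]
        exact Subgroup.orderOf_dvd_natCard Q hx) (v := ⟨v, hVK hv⟩) hv
    exact congrArg Subtype.val h1
  have hVp : IsPGroup p V := fun x => ⟨1, by
    rw [pow_one]; exact Subtype.ext (hexp x x.2)⟩
  have hpV : p ∣ Nat.card V := by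
    have : Nontrivial V := (Subgroup.nontrivial_iff_ne_bot V).2 hV.2.1
    obtain ⟨n, hn0, hn⟩ := hVp.nontrivial_iff_card.1 this
    exact hn.symm ▸ dvd_pow_self _ (ne_of_gt hn0)
  -- second step
  have hpi : ¬ p ∣ φ.ker.index := by
    have hA := ss_of_surj φ.rangeRestrict φ.rangeRestrict_surjective hMs
    obtain ⟨W, hWn, hW1, hW2⟩ := tower hA p
    have hcA : Nat.card φ.range = φ.ker.index := (Subgroup.index_ker φ).symm
    have hWp : IsPGroup p W := by
      have h1 : Nat.card W = p ^ (Nat.card W).primeFactorsList.length := by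
        apply Nat.eq_prime_pow_of_unique_prime_dvd Nat.card_pos.ne'
        intro d hd hdd
        have h1 := hW1 d hd hdd
        have h2 := hQ2 d hd (hdd.trans ((Subgroup.card_subgroup_dvd_card W).trans
          (hcA ▸ Subgroup.index_dvd_of_le hQker)))
        omega
      exact IsPGroup.of_card h1
    let F : Subgroup G :=
      { carrier := {v | ∃ hv : v ∈ V, ∀ w ∈ W, (w : MulAut V) ⟨v, hv⟩ = ⟨v, hv⟩}
        one_mem' := ⟨V.one_mem, fun w _ => map_one (w : MulAut V)⟩
        mul_mem' := by
          rintro a b ⟨ha, ha'⟩ ⟨hb, hb'⟩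
          refine ⟨V.mul_mem ha hb, fun w hw => ?_⟩
          have := map_mul (w : MulAut V) ⟨a, ha⟩ ⟨b, hb⟩
          rw [ha' w hw, hb' w hw] at this
          exact this
        inv_mem' := by
          rintro a ⟨ha, ha'⟩
          refine ⟨V.inv_mem ha, fun w hw => ?_⟩
          have := map_inv (w : MulAut V) ⟨a, ha⟩
          rw [ha' w hw] at this
          exact this }
    have hFn : F.Normal := by
      apply norm_of_sup hMV
      · rintro m hm f ⟨hf, hf'⟩
        refine ⟨hVn.conj_mem _ hf _, fun w hw => ?_⟩
        have e : (⟨m * f * m⁻¹, hVn.conj_mem _ hf _⟩ : V) = φ ⟨m, hm⟩ ⟨f, hf⟩ :=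
          Subtype.ext (hφ ⟨m, hm⟩ ⟨f, hf⟩).symm
        rw [e]
        have h1 := hf' _ (hWn.conj_mem w hw (φ.rangeRestrict ⟨m, hm⟩)⁻¹)
        have h2 := congrArg (φ ⟨m, hm⟩) h1
        have e3 : w * φ.rangeRestrict ⟨m, hm⟩ = φ.rangeRestrict ⟨m, hm⟩ *
            ((φ.rangeRestrict ⟨m, hm⟩)⁻¹ * w * (φ.rangeRestrict ⟨m, hm⟩)⁻¹⁻¹) := by group
        have e4 := congrArg (fun z : φ.range => (z : MulAut V) ⟨f, hf⟩) e3
        exact e4.trans h2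
      · rintro m hm f ⟨hf, hf'⟩
        rw [hcomm m hm f hf, mul_inv_cancel_right]
        exact ⟨hf, hf'⟩
    have hFV : F ≤ V := fun v hv => hv.1
    let act : MulAction W V := MulAction.compHom V (φ.range.subtype.comp W.subtype)
    obtain ⟨b, hb, hb1⟩ := hWp.exists_fixed_point_of_prime_dvd_card_of_fixed_point V hpV (a := 1)
      (fun w => map_one (w.1 : MulAut V))
    have hFb : F ≠ ⊥ := by
      intro hF
      have : (b : G) ∈ F := ⟨b.2, fun w hw => hb ⟨w, hw⟩⟩
      rw [hF, Subgroup.mem_bot] at this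
      exact hb1 (Subtype.ext this.symm)
    have hFeq := hV.2.2 F hFn hFV hFb
    have hWb : W = ⊥ := by
      rw [eq_bot_iff]
      intro w hw
      rw [Subgroup.mem_bot]
      apply Subtype.ext
      apply MulEquiv.ext
      intro v
      have hv : (v : G) ∈ F := by rw [hFeq]; exact v.2
      obtain ⟨_, hv2⟩ := hv
      exact hv2 w hw
    rw [hWb, Subgroup.index_bot, hcA] at hW2
    intro hd
    exact (hW2 p hp hd).false
  -- third step
  have hfr : φ.ker ≤ frattini M := by
    refine le_iInf₂ (fun H hH => ?_)
    have hH : IsCoatom H := hH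
    by_contra hle
    have hsup : H ⊔ φ.ker = ⊤ := hH.2 _ (lt_of_le_of_ne le_sup_left (fun h => hle (by
      rw [h]; exact le_sup_right)))
    have hVK : V ≤ H.map M.subtype ⊔ V := le_sup_right
    obtain ⟨N, hNn, hNV, hNc⟩ := ss_prime_normal (hprop H hH.1) (V.subgroupOf _)
      (hVn.subgroupOf _) (by
        rw [Ne, Subgroup.subgroupOf_eq_bot]
        intro hd
        apply hV.2.1
        rw [eq_bot_iff]
        exact hd.le_bot.trans' (le_inf le_rfl hVK))
    have hN'V : N.map (Subgroup.subtype _) ≤ V := by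
      rintro _ ⟨n, hn, rfl⟩
      exact hNV hn
    have hcard : Nat.card (N.map (Subgroup.subtype _)) = Nat.card N :=
      Subgroup.card_map_of_injective (Subgroup.subtype_injective _)
    have hK : ∀ m ∈ H.map M.subtype ⊔ V, ∀ f ∈ N.map (Subgroup.subtype _),
        m * f * m⁻¹ ∈ N.map (Subgroup.subtype _) := by
      rintro m hm _ ⟨f, hf, rfl⟩
      exact ⟨⟨m, hm⟩ * f * ⟨m, hm⟩⁻¹, hNn.conj_mem _ hf _, rfl⟩
    have hN'n : (N.map (Subgroup.subtype _)).Normal := by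
      apply norm_of_sup hMV
      · intro m hm f hf
        have h1 : (⟨m, hm⟩ : M) ∈ H ⊔ φ.ker := by rw [hsup]; trivial
        obtain ⟨a, ha, c, hc, hac⟩ := Subgroup.mem_sup_of_normal_right.1 h1
        have hac' : (a : G) * c = m := congrArg Subtype.val hac
        have h2 := (hker c).1 hc f (hN'V hf)
        have h3 := hK a ((le_sup_left : _ ≤ H.map M.subtype ⊔ V) ⟨a, ha, rfl⟩) f hf
        have e : m * f * m⁻¹ = a * f * (a : G)⁻¹ := by
          rw [← hac', mul_assoc (a : G), h2]; group
        rw [e]; exact h3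
      · intro m hm f hf
        exact hK m (hVK hm) f hf
    have hN'e := hV.2.2 _ hN'n hN'V (by
      intro hb
      rw [hb, Subgroup.card_bot] at hcard
      exact hNc.ne_one hcard.symm)
    rw [hN'e] at hcard
    apply hG.1
    rw [ss_iff]
    exact ss_of_step (prime_step hVn (hcard ▸ hNc)) ((ssr_iff hVn).2 hR)
  have h1 := lemF inferInstance hfr hp hpi
  rw [← Subgroup.card_mul_index φ.ker] at hpM
  rcases (hp.dvd_mul).1 hpM with h | h
  · exact h1 h
  · exact hpi h


theorem maxIn_iff {G : Type*} [Group G] {H K : Subgroup G} : IsMaximalIn H K ↔ H ⋖ K := by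
  constructor
  · rintro ⟨hle, hc⟩
    refine ⟨lt_of_le_of_ne hle ?_, ?_⟩
    · rintro rfl
      exact hc.1 (Subgroup.subgroupOf_self H)
    · intro X h1 h2
      have h3 := hc.2 (X.subgroupOf K) (lt_of_le_of_ne (Subgroup.comap_mono h1.le) (by
        intro he
        have h4 := Subgroup.subgroupOf_inj.1 he
        rw [inf_eq_left.2 hle, inf_eq_left.2 h2.le] at h4
        exact h1.ne h4))
      rw [Subgroup.subgroupOf_eq_top] at h3
      exact h2.not_ge h3
  · intro h
    refine ⟨h.le, ?_, ?_⟩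
    · rw [Ne, Subgroup.subgroupOf_eq_top]
      exact h.lt.not_ge
    · intro X hX
      have h1 : H ≤ X.map K.subtype := fun x hx =>
        ⟨⟨x, h.le hx⟩, hX.le (show (⟨x, h.le hx⟩ : K) ∈ H.subgroupOf K from hx), rfl⟩
      have h2 : X.map K.subtype ≤ K := Subgroup.map_subtype_le X
      have e : (X.map K.subtype).subgroupOf K = X :=
        Subgroup.comap_map_eq_self_of_injective K.subtype_injective X
      rcases h.eq_or_eq h1 h2 with h3 | h3
      · rw [h3] at e
        exact absurd e hX.ne
      · rw [h3, Subgroup.subgroupOf_self] at e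
        exact e.symm

theorem twomax_iff {G : Type*} [Group G] {H : Subgroup G} :
    IsNMaximal 2 H ↔ ∃ M : Subgroup G, IsCoatom M ∧ H ⋖ M := by
  constructor
  · rintro ⟨M, ⟨K, hK, hMK⟩, hHM⟩
    have hK : K = ⊤ := hK
    subst hK
    rw [maxIn_iff] at hMK hHM
    exact ⟨M, covBy_top_iff.1 hMK, hHM⟩
  · rintro ⟨M, hM, hHM⟩
    exact ⟨M, ⟨⊤, rfl, maxIn_iff.2 (covBy_top_iff.2 hM)⟩, maxIn_iff.2 hHM⟩

/-- one step of a chain -/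
def KStep {G : Type*} [Group G] (A B : Subgroup G) : Prop :=
  A ≤ B ∧ ((A.subgroupOf B).Normal ∨
    IsSupersoluble (B ⧸ (A.subgroupOf B).normalCore))

theorem ku_iff {G : Type*} [Group G] {H : Subgroup G} :
    IsKUSubnormal H ↔ Relation.ReflTransGen KStep H ⊤ := by
  rw [← chain_iff]; rfl

theorem kstep_iff {G : Type*} [Group G] [Finite G] {A B : Subgroup G} :
    KStep A B ↔ A ≤ B ∧ ((A.subgroupOf B).Normal ∨ ssResidual B ≤ A.subgroupOf B) := by
  unfold KStep
  have : IsSupersoluble (B ⧸ (A.subgroupOf B).normalCore) ↔ ssResidual B ≤ A.subgroupOf B := by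
    rw [ss_quot_iff, ssr_iff inferInstance]
    have := res_normal B
    exact Subgroup.normal_le_normalCore
  rw [this]

theorem kstep_ss {G : Type*} [Group G] [Finite G] {A B : Subgroup G} (h : A ≤ B)
    (hB : IsSupersoluble B) : KStep A B := by
  rw [kstep_iff]
  refine ⟨h, Or.inr ?_⟩
  rw [ss_iff_res.1 hB]
  exact bot_le

theorem res_top {G : Type*} [Group G] [Finite G] :
    ssResidual G = (ssResidual (⊤ : Subgroup G)).map (⊤ : Subgroup G).subtype :=
  res_map _ (fun x => ⟨⟨x, trivial⟩, rfl⟩)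

theorem kstep_top {G : Type*} [Group G] [Finite G] {A : Subgroup G} :
    KStep A ⊤ ↔ A.Normal ∨ ssResidual G ≤ A := by
  rw [kstep_iff, res_top (G := G), Subgroup.map_le_iff_le_comap]
  constructor
  · rintro ⟨-, h | h⟩
    · left
      exact ⟨fun x hx g => h.conj_mem ⟨x, trivial⟩ hx ⟨g, trivial⟩⟩
    · exact Or.inr h
  · rintro (h | h)
    · exact ⟨le_top, Or.inl (h.subgroupOf _)⟩
    · exact ⟨le_top, Or.inr h⟩

theorem step1 {G : Type*} [Group G] [Finite G] {M H : Subgroup G} (hHM : H ⋖ M)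
    (h : Relation.ReflTransGen KStep H ⊤) : ssResidual M ≤ H.subgroupOf M := by
  have hcoat := (maxIn_iff.2 hHM).2
  have key : ∀ X : Subgroup G, Relation.ReflTransGen KStep X ⊤ → H ≤ X → ¬ M ≤ X →
      ssResidual M ≤ H.subgroupOf M := by
    intro X hX
    induction hX using Relation.ReflTransGen.head_induction_on with
    | refl => intro _ h2; exact absurd le_top h2
    | head hXY hY ih =>
      rename_i X Y
      intro h1 h2
      rw [kstep_iff] at hXY
      by_cases hMY : M ≤ Y
      · have e : X.subgroupOf M = H.subgroupOf M := by
          by_contra hne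
          have h3 := hcoat.2 (X.subgroupOf M)
            (lt_of_le_of_ne (Subgroup.comap_mono h1) (Ne.symm hne))
          rw [Subgroup.subgroupOf_eq_top] at h3
          exact h2 h3
        rcases hXY.2 with h3 | h3
        · apply coatom_normal_res hcoat
          rw [← e]
          exact ⟨fun x hx g => h3.conj_mem ⟨x, hMY x.2⟩ hx ⟨g, hMY g.2⟩⟩
        · rw [← e]
          intro r hr
          have h4 := res_sub (Subgroup.inclusion hMY) ⟨r, hr, rfl⟩
          exact h3 h4
      · exact ih (h1.trans hXY.1) hMY
  exact key H h le_rfl hHM.lt.not_ge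

theorem last_step {G : Type*} [Group G] [Finite G] {H : Subgroup G}
    (h : Relation.ReflTransGen KStep H ⊤) : H ≠ ⊤ → ∃ L, H ≤ L ∧ L ≠ ⊤ ∧ KStep L ⊤ := by
  induction h using Relation.ReflTransGen.head_induction_on with
  | refl => intro h; exact absurd rfl h
  | head hXY hY ih =>
    rename_i X Y
    intro hX
    by_cases hYt : Y = ⊤
    · subst hYt
      exact ⟨X, le_rfl, hX, hXY⟩
    · obtain ⟨L, h1, h2, h3⟩ := ih hYt
      exact ⟨L, hXY.1.trans h1, h2, h3⟩

theorem step2 {G : Type*} [Group G] [Finite G] {M H : Subgroup G} (hM : IsCoatom M)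
    (hMs : IsSupersoluble M) (hR : ¬ ssResidual G ≤ M) (hHM : H ⋖ M)
    (h : Relation.ReflTransGen KStep H ⊤) : H ⊔ ssResidual G ≠ ⊤ ∨ H.Normal := by
  obtain ⟨L, hHL, hLt, hL⟩ := last_step h (hHM.lt.trans_le le_top).ne
  rw [kstep_top] at hL
  have key : ssResidual G ≤ L → H ⊔ ssResidual G ≠ ⊤ := by
    intro hRL ht
    exact hLt (top_le_iff.1 (ht ▸ sup_le hHL hRL))
  rcases hL with hL | hL
  · by_cases hLM : L ≤ M
    · rcases hHM.eq_or_eq hHL hLM with h1 | h1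
      · right; rw [← h1]; exact hL
      · exact absurd (coatom_normal_res hM (h1 ▸ hL)) hR
    · left
      apply key
      apply res_le_of_sup hL hMs
      exact hM.2 _ (lt_of_le_of_ne le_sup_left (fun h => hLM (by rw [h]; exact le_sup_right)))
  · exact Or.inl (key hL)

theorem sup_coatom {G : Type*} [Group G] {M L : Subgroup G} (hM : IsCoatom M) (h : ¬ L ≤ M) :
    M ⊔ L = ⊤ :=
  hM.2 _ (lt_of_le_of_ne le_sup_left (fun h' => h (by rw [h']; exact le_sup_right)))

theorem mns_of {G : Type*} [Group G] [Finite G] (hG : ¬ IsSupersoluble G)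
    (h : ∀ H : Subgroup G, IsNMaximal 2 H → IsKUSubnormal H) : IsMinimalNonsupersoluble G := by
  refine ⟨hG, fun K hK => ?_⟩
  obtain ⟨M, hM, hKM⟩ := (eq_top_or_exists_le_coatom K).resolve_left hK
  refine ss_le hKM ?_
  rw [ss_iff_res]
  apply thA
  refine le_iInf₂ (fun H hH => ?_)
  have hH : IsCoatom H := hH
  have e : (H.map M.subtype).subgroupOf M = H :=
    Subgroup.comap_map_eq_self_of_injective M.subtype_injective H
  have hc : H.map M.subtype ⋖ M :=
    maxIn_iff.1 ⟨Subgroup.map_subtype_le H, by rw [e]; exact hH⟩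
  have := step1 hc (ku_iff.1 (h _ (twomax_iff.2 ⟨M, hM, hc⟩)))
  rwa [e] at this

theorem quot_mns {G : Type*} [Group G] [Finite G] (hG : IsMinimalNonsupersoluble G)
    {N : Subgroup G} [N.Normal] (hN : ¬ ssResidual G ≤ N) : IsMinimalNonsupersoluble (G ⧸ N) := by
  refine ⟨?_, fun H hH => ?_⟩
  · rwa [ss_quot_iff, ssr_iff inferInstance]
  · have h1 : IsSupersoluble (H.comap (QuotientGroup.mk' N)) := by
      apply hG.2
      intro ht
      apply hH
      rw [← Subgroup.map_comap_eq_self_of_surjective (QuotientGroup.mk'_surjective N) H, ht,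
        Subgroup.map_top_of_surjective _ (QuotientGroup.mk'_surjective N)]
    exact ss_of_surj ((QuotientGroup.mk' N).subgroupComap H)
      (MonoidHom.subgroupComap_surjective_of_surjective _ _ (QuotientGroup.mk'_surjective N)) h1

theorem inf_bot_of {G : Type*} [Group G] {M V : Subgroup G} (hV : IsMinimalNormal V)
    (hc : ∀ x ∈ V, ∀ y ∈ V, x * y = y * x) (hMV : M ⊔ V = ⊤) (h : ¬ V ≤ M) : M ⊓ V = ⊥ := by
  by_contra hne
  have hn : (M ⊓ V).Normal := by
    apply norm_of_sup hMV
    · rintro m hm f ⟨h1, h2⟩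
      exact ⟨M.mul_mem (M.mul_mem hm h1) (M.inv_mem hm), hV.1.conj_mem _ h2 _⟩
    · intro m hm f hf
      rw [hc m hm f hf.2, mul_inv_cancel_right]
      exact hf
  have := hV.2.2 _ hn inf_le_right hne
  exact h (by rw [← this]; exact inf_le_left)

theorem main_min {G : Type*} [Group G] [Finite G] (hG : IsMinimalNonsupersoluble G)
    (h : ∀ H : Subgroup G, IsNMaximal 2 H → IsKUSubnormal H) :
    IsMinimalNormal (ssResidual G) := by
  have hRn := res_normal G
  have hR0 : ssResidual G ≠ ⊥ := fun hb => hG.1 (ss_iff_res.2 hb)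
  have hRt := res_ne_top hG
  obtain ⟨R, hRe⟩ : ∃ R, R = ssResidual G := ⟨_, rfl⟩
  rw [← hRe] at hRn hR0 hRt ⊢
  have hfin : {T : Subgroup G | T.Normal ∧ T < R}.Finite := Set.toFinite _
  obtain ⟨N, hN⟩ := hfin.exists_maximal ⟨⊥, inferInstance, bot_lt_iff_ne_bot.2 hR0⟩
  have hNn := hN.prop.1
  have hNR := hN.prop.2
  suffices hNb : N = ⊥ by
    refine ⟨hRn, hR0, fun T hT hTR hT0 => ?_⟩
    by_contra hne
    have := hN.eq_of_le ⟨hT, lt_of_le_of_ne hTR hne⟩ (by rw [hNb]; exact bot_le)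
    exact hT0 (this.symm.trans hNb)
  have hsurj := QuotientGroup.mk'_surjective N
  have hGq : IsMinimalNonsupersoluble (G ⧸ N) := quot_mns hG (by rw [← hRe]; exact hNR.not_ge)
  have hVe : ssResidual (G ⧸ N) = R.map (QuotientGroup.mk' N) := by
    rw [hRe]; exact res_map _ hsurj
  have hcomapV : (ssResidual (G ⧸ N)).comap (QuotientGroup.mk' N) = R := by
    rw [hVe, Subgroup.comap_map_eq_self]
    rw [QuotientGroup.ker_mk']; exact hNR.le
  have hVn := res_normal (G ⧸ N)
  have hV0 : ssResidual (G ⧸ N) ≠ ⊥ := fun hb => hGq.1 (ss_iff_res.2 hb)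
  have hVs := ss_solvable (hGq.2 _ (res_ne_top hGq))
  obtain ⟨M', hM', hVM'⟩ : ∃ M' : Subgroup (G ⧸ N), IsCoatom M' ∧ ¬ ssResidual (G ⧸ N) ≤ M' := by
    by_contra hcon
    push Not at hcon
    exact hV0 (thA (le_iInf₂ (fun H hH => hcon H hH)))
  obtain ⟨V, hVd⟩ : ∃ V, V = ssResidual (G ⧸ N) := ⟨_, rfl⟩
  have hRV : ssResidual (G ⧸ N) ≤ V := hVd.ge
  rw [← hVd] at hVe hcomapV hVn hV0 hVs hVM'
  have hVmin : IsMinimalNormal V := by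
    refine ⟨hVn, hV0, fun T hT hTV hT0 => ?_⟩
    by_contra hne
    have e := Subgroup.map_comap_eq_self_of_surjective hsurj T
    have hle : T.comap (QuotientGroup.mk' N) ≤ R := by
      rw [← hcomapV]; exact Subgroup.comap_mono hTV
    have hlt : T.comap (QuotientGroup.mk' N) < R := by
      refine lt_of_le_of_ne hle (fun he => hne ?_)
      rw [← e, he, hVe]
    have := hN.eq_of_le ⟨hT.comap _, hlt⟩ (QuotientGroup.le_comap_mk' N T)
    apply hT0
    rw [← e, ← this, QuotientGroup.map_mk'_self]
  have hcomm := minnormal_comm hVmin hVs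
  obtain ⟨p, hp, hexp⟩ := minnormal_exp hVmin hcomm
  have hpf := Fact.mk hp
  have hMVt : M' ⊔ V = ⊤ := sup_coatom hM' hVM'
  have hpM' := lemC hGq hVmin hcomm hp hexp hRV hMVt (inf_bot_of hVmin hcomm hMVt hVM')
  obtain ⟨M, hMd⟩ : ∃ M, M = M'.comap (QuotientGroup.mk' N) := ⟨_, rfl⟩
  have hMmap : M.map (QuotientGroup.mk' N) = M' := by
    rw [hMd]; exact Subgroup.map_comap_eq_self_of_surjective hsurj M'
  have hM : IsCoatom M := by
    rw [hMd]; exact Subgroup.isCoatom_comap_of_surjective hsurj hM'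
  have hRM : ¬ R ≤ M := by
    rw [hMd, ← Subgroup.map_le_iff_le_comap, ← hVe]; exact hVM'
  have hNM : N ≤ M := by rw [hMd]; exact QuotientGroup.le_comap_mk' N M'
  have hMs := hG.2 M hM.1
  have hfr : N.subgroupOf M ≤ frattini M := by
    refine le_iInf₂ (fun H hH => ?_)
    have hH : IsCoatom H := hH
    by_contra hle
    have hsup := sup_coatom hH hle
    have e : (H.map M.subtype).subgroupOf M = H :=
      Subgroup.comap_map_eq_self_of_injective M.subtype_injective H
    have hc : H.map M.subtype ⋖ M :=
      maxIn_iff.1 ⟨Subgroup.map_subtype_le H, by rw [e]; exact hH⟩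
    have hHN : H.map M.subtype ⊔ N = M := by
      have := congrArg (Subgroup.map M.subtype) hsup
      rw [Subgroup.map_sup, Subgroup.subgroupOf_map_subtype, inf_eq_left.2 hNM,
        ← MonoidHom.range_eq_map, Subgroup.range_subtype] at this
      exact this
    rcases step2 hM hMs (hRe ▸ hRM) hc (ku_iff.1 (h _ (twomax_iff.2 ⟨M, hM, hc⟩))) with h1 | h1
    · apply h1
      rw [← hRe, eq_top_iff, ← sup_coatom hM hRM]
      refine sup_le ?_ le_sup_right
      exact hHN.ge.trans (sup_le_sup_left hNR.le _)
    · apply hRM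
      rw [hRe]
      apply coatom_normal_res hM
      rw [← hHN]
      infer_instance
  have hpi : ¬ p ∣ (N.subgroupOf M).index := by
    have h1 := Subgroup.relIndex_ker M (QuotientGroup.mk' N)
    rw [QuotientGroup.ker_mk', hMmap] at h1
    change ¬ p ∣ N.relIndex M
    rw [h1]
    exact hpM'
  have hpN : ¬ p ∣ Nat.card N := by
    have h1 := lemF (hNn.subgroupOf M) hfr hp hpi
    rwa [Nat.card_congr (Subgroup.subgroupOfEquivOfLe hNM).toEquiv] at h1
  obtain ⟨P⟩ : Nonempty (Sylow p R) := inferInstance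
  have hVp : IsPGroup p V := fun x => ⟨1, by
    rw [pow_one]; exact Subtype.ext (hexp x x.2)⟩
  have hPN' : (P : Subgroup R) ⊔ N.subgroupOf R = ⊤ := by
    rw [← Subgroup.index_eq_one]
    have d1 := Subgroup.index_dvd_of_le (le_sup_left (a := (P : Subgroup R)) (b := N.subgroupOf R))
    have d2 := Subgroup.index_dvd_of_le (le_sup_right (a := (P : Subgroup R)) (b := N.subgroupOf R))
    have hi : (N.subgroupOf R).index = Nat.card V := by
      have h1 := Subgroup.relIndex_ker R (QuotientGroup.mk' N)
      rw [QuotientGroup.ker_mk', ← hVe] at h1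
      exact h1
    obtain ⟨k, hk⟩ := IsPGroup.iff_card.1 hVp
    have hc : (P : Subgroup R).index.Coprime (N.subgroupOf R).index := by
      rw [hi, hk]
      exact (Nat.Coprime.pow_left _ ((hp.coprime_iff_not_dvd).2 P.not_dvd_index)).symm
    have := Nat.dvd_gcd d1 d2
    rw [hc] at this
    exact Nat.dvd_one.1 this
  have hFr := P.normalizer_sup_eq_top
  obtain ⟨P', hP'⟩ : ∃ P', P' = (P : Subgroup R).map R.subtype := ⟨_, rfl⟩
  have hPN : P' ⊔ N = R := by
    have := congrArg (Subgroup.map R.subtype) hPN'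
    rw [Subgroup.map_sup, Subgroup.subgroupOf_map_subtype, inf_eq_left.2 hNR.le,
      ← MonoidHom.range_eq_map, Subgroup.range_subtype, ← hP'] at this
    exact this
  have hP'p : IsPGroup p P' := by rw [hP']; exact P.2.map _
  have hFr2 : Subgroup.normalizer (P' : Set G) ⊔ N = ⊤ := by
    rw [eq_top_iff, hP', ← hFr, ← hP']
    refine sup_le le_sup_left ?_
    rw [← hPN]
    exact sup_le_sup_right Subgroup.le_normalizer _
  by_cases ht : Subgroup.normalizer (P' : Set G) = ⊤
  · have hP'n : P'.Normal := Subgroup.normalizer_eq_top_iff.1 ht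
    have hPM : ¬ P' ≤ M := fun hle => hRM (by rw [← hPN]; exact sup_le hle hNM)
    have hRP := res_le_of_sup hP'n hMs (sup_coatom hM hPM)
    rw [← hRe] at hRP
    have hNp := hP'p.to_le (hNR.le.trans hRP)
    obtain ⟨k, hk⟩ := IsPGroup.iff_card.1 hNp
    rcases Nat.eq_zero_or_pos k with h0 | h0
    · rw [h0, pow_zero] at hk
      exact Subgroup.card_eq_one.1 hk
    · exact absurd (hk.symm ▸ dvd_pow_self p h0.ne') hpN
  · have := res_le_of_sup hNn (hG.2 _ ht) hFr2
    rw [← hRe] at this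
    exact absurd this hNR.not_ge

theorem ku_of_sdh {G : Type*} [Group G] [Finite G] (hG : IsSDH G) (H : Subgroup G)
    (hH : IsNMaximal 2 H) : IsKUSubnormal H := by
  obtain ⟨M, hM, hHM⟩ := twomax_iff.1 hH
  rw [ku_iff]
  obtain ⟨hG, hR⟩ := hG
  by_cases hRM : ssResidual G ≤ M
  · exact (Relation.ReflTransGen.single (kstep_ss hHM.le (hG.2 M hM.1))).tail
      (kstep_top.2 (Or.inr hRM))
  · have hcomm := minnormal_comm hR (ss_solvable (hG.2 _ (res_ne_top hG)))
    have hi := inf_bot_of hR hcomm (sup_coatom hM hRM) hRM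
    have hne : H ⊔ ssResidual G ≠ ⊤ := by
      intro ht
      exact hHM.lt.not_ge (modl hR.1 hHM.le (by rw [hi]; exact bot_le) (by rw [ht]; exact le_top))
    exact (Relation.ReflTransGen.single (kstep_ss le_sup_left (hG.2 _ hne))).tail
      (kstep_top.2 (Or.inr le_sup_right))

/-- Every `2`-maximal subgroup of `G` is `K`-`𝔘`-subnormal in `G` if and only if
`G` is either supersoluble or an `SDH`-group. -/
theorem every_2maximal_KUsubnormal_iff (G : Type*) [Group G] [Finite G] :
    (∀ H : Subgroup G, IsNMaximal 2 H → IsKUSubnormal H) ↔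
      IsSupersoluble G ∨ IsSDH G := by
  constructor
  · intro h
    by_cases hG : IsSupersoluble G
    · exact Or.inl hG
    · right
      have h1 := mns_of hG h
      exact ⟨h1, main_min h1 h⟩
  · rintro (h | h) H hH
    · rw [ku_iff]
      refine Relation.ReflTransGen.single (kstep_top.2 (Or.inr ?_))
      rw [ss_iff_res.1 h]
      exact bot_le
    · exact ku_of_sdh h H hH
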